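/- arXiv:math/0308280 — 3 statements merged into one kernel-verified Lean document; each statement's English description precedes it below -/
import Mathlib

section
/- For every m ≥ 2 and every n ≥ binom(m,2)·2^{m−2}, the toric ideal I_{K_{m,n}} of the complete bipartite graph K_{m,n} is not generated in degree ≤ 2^{m−1} − 1; that is, I_{K_{m,n}} has a minimal generator of degree 2^{m−1} and the Markov width satisfies μ(K_{m,n}) ≥ 2^{m−1}. -/
open MvPolynomial Finset

namespace BinaryGraphModels

variable {V : Type} [Fintype V] [DecidableEq V]

/-- The monomial map `φ_G` of the binary graph model: the variable `p_I` is sent to the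
product over edges `{j,k}` of the variable `t^{jk}_{I(j)I(k)}` (encoded as the unordered pair
`{(j, I j), (k, I k)}`) times the product over isolated vertices `l` of `t^{l}_{I(l)}`. -/
noncomputable def phi (G : SimpleGraph V) :
    MvPolynomial (V → Bool) ℂ →ₐ[ℂ] MvPolynomial (Sym2 (V × Bool) ⊕ (V × Bool)) ℂ := by
  letI : DecidableRel G.Adj := Classical.decRel _
  exact aeval fun I : V → Bool =>
    (∏ e ∈ G.edgeFinset,
      (X (Sum.inl (Sym2.map (fun v => (v, I v)) e)) :
        MvPolynomial (Sym2 (V × Bool) ⊕ (V × Bool)) ℂ)) *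
    ∏ l ∈ univ.filter (fun l : V => ∀ k, ¬ G.Adj l k), X (Sum.inr (l, I l))

/-- The toric ideal `I_G` of the binary graph model of `G`. -/
noncomputable def toricIdeal (G : SimpleGraph V) : Ideal (MvPolynomial (V → Bool) ℂ) :=
  RingHom.ker (phi G).toRingHom

/-- `I_G` is generated in degree at most `d`. -/
def GenInDegLE (G : SimpleGraph V) (d : ℕ) : Prop :=
  toricIdeal G =
    Ideal.span {f : MvPolynomial (V → Bool) ℂ | f ∈ toricIdeal G ∧ f.totalDegree ≤ d}

/-- The Markov width `μ(G)`: the least `d` such that `I_G` is generated in degree `≤ d`. -/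
noncomputable def markovWidth (G : SimpleGraph V) : ℕ :=
  sInf {d : ℕ | GenInDegLE G d}

/-- `f` is a minimal generator of `I_G`, i.e. `f ∈ I_G` and `f ∉ 𝔪 · I_G` where `𝔪` is the
irrelevant maximal ideal generated by all the variables. -/
def IsMinimalGenerator (G : SimpleGraph V) (f : MvPolynomial (V → Bool) ℂ) : Prop :=
  f ∈ toricIdeal G ∧
    f ∉ Ideal.span (Set.range (X : (V → Bool) → MvPolynomial (V → Bool) ℂ)) * toricIdeal G

/-- Two integer tables have the same `G`-marginals: equal two-way marginals along every edge
and equal one-way marginals at every isolated vertex. -/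
def MarginalsEq (G : SimpleGraph V) (v₁ v₂ : (V → Bool) → ℤ) : Prop :=
  (∀ j k : V, G.Adj j k → ∀ a b : Bool,
    (∑ I : V → Bool, if I j = a ∧ I k = b then v₁ I else 0) =
    (∑ I : V → Bool, if I j = a ∧ I k = b then v₂ I else 0)) ∧
  (∀ l : V, (∀ k, ¬ G.Adj l k) → ∀ a : Bool,
    (∑ I : V → Bool, if I l = a then v₁ I else 0) =
    (∑ I : V → Bool, if I l = a then v₂ I else 0))

/-- `B` is a Markov basis for `G`: any two nonnegative tables with the same `G`-marginals are
connected by a path of moves from `±B` staying nonnegative. -/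
def IsMarkovBasis (G : SimpleGraph V) (B : Finset ((V → Bool) → ℤ)) : Prop :=
  ∀ v₁ v₂ : (V → Bool) → ℤ, (∀ I, 0 ≤ v₁ I) → (∀ I, 0 ≤ v₂ I) →
    MarginalsEq G v₁ v₂ →
    ∃ L : List ((V → Bool) → ℤ),
      (∀ u ∈ L, u ∈ B ∨ -u ∈ B) ∧
      v₁ + L.sum = v₂ ∧
      ∀ n : ℕ, n ≤ L.length → ∀ I, 0 ≤ (v₁ + (L.take n).sum) I

/-- The binomial `p^{u⁺} - p^{u⁻}` associated to an integer table `u`. -/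
noncomputable def moveBinomial (u : (V → Bool) → ℤ) : MvPolynomial (V → Bool) ℂ :=
  (∏ I : V → Bool, X I ^ (u I).toNat) - ∏ I : V → Bool, X I ^ (-u I).toNat

end BinaryGraphModels

/-!
Suppose that the fiber of a monomial `x ^ u` contains a single other monomial `x ^ v` and that the
two have no common variable. Then every proper divisor of `x ^ u` is alone in its fiber, so
multiplying an element of the toric ideal by a polynomial multiplies its `x ^ u`-coefficient by the
constant term of the latter, and every element of degree less than that of `x ^ u` has
`x ^ u`-coefficient `0`. Hence `x ^ u - x ^ v` is a minimal generator, and its degree bounds the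
Markov width from below.

For `K_{m,n}`, read the labels of the `m` left vertices as a vertex of the cube `{0,1}^m`. There are
`binom(m,2) * 2^(m-2)` squares in the cube, so for `n` at least this number the right vertices can
be matched to squares covering all the edges of the cube. Label a right vertex by whether the cube
vertex lies in its square. The labelings of the even vertices and those of the odd ones are two
tables with the same marginals, because the two vertices of an edge have opposite parity and every
side of a square is such an edge. Conversely, in a table with these marginals each side of each
square carries exactly one entry labeled `true`. Since the squares cover all the edges and the total
is `2^(m-1)`, each edge of the cube carries exactly one entry, so that the entries sit on one of the
two parity classes, and no entry of a square is labeled `false`.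
-/

namespace BinaryGraphModels

section ToricMap

variable {σ τ R : Type*} [CommSemiring R]

variable (R) in
/-- The monomial map `xᵢ ↦ t ^ a i`, whose kernel is the toric ideal of the vectors `a i`. -/
noncomputable def toricMap (a : σ → τ →₀ ℕ) :
    MvPolynomial σ R →ₐ[R] MvPolynomial τ R :=
  aeval fun i => monomial (a i) 1

/-- The binomial `x ^ u - x ^ v` is indispensable for the toric ideal of `a`: its fiber consists
of `u` and `v` only, and `x ^ u`, `x ^ v` have no common variable. -/
structure IsIndispensablePair (a : σ → τ →₀ ℕ) (u v : σ →₀ ℕ) : Prop where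
  fiber_eq : ∀ t, Finsupp.linearCombination ℕ a t = Finsupp.linearCombination ℕ a u ↔
    t = u ∨ t = v
  disjoint : Disjoint u v

variable {a : σ → τ →₀ ℕ} {u v : σ →₀ ℕ} {g : MvPolynomial σ R}

theorem toricMap_monomial (a : σ → τ →₀ ℕ) (s : σ →₀ ℕ) (r : R) :
    toricMap R a (monomial s r) = monomial (Finsupp.linearCombination ℕ a s) r := by
  simp only [toricMap, aeval_monomial, monomial_pow, one_pow, Finsupp.prod,
    ← monomial_sum_one, algebraMap_eq, C_mul_monomial, mul_one, Finsupp.linearCombination_apply,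
    Finsupp.sum]

theorem coeff_toricMap [DecidableEq τ] (a : σ → τ →₀ ℕ) (d : τ →₀ ℕ) (g : MvPolynomial σ R) :
    coeff d (toricMap R a g) =
      ∑ s ∈ g.support with Finsupp.linearCombination ℕ a s = d, coeff s g := by
  conv_lhs => rw [g.as_sum]
  simp only [map_sum, toricMap_monomial, coeff_sum, coeff_monomial, sum_filter]

theorem coeff_eq_zero_of_fiber_subsingleton {s : σ →₀ ℕ}
    (hs : ∀ t, Finsupp.linearCombination ℕ a t = Finsupp.linearCombination ℕ a s → t = s)
    (hg : toricMap R a g = 0) : coeff s g = 0 := by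
  classical
  have hsum := coeff_toricMap a (Finsupp.linearCombination ℕ a s) g
  rw [hg, coeff_zero] at hsum
  by_contra hne
  refine hne ?_
  rw [hsum, sum_eq_single_of_mem s (by simpa using hne)]
  exact fun t ht hts => absurd (hs t (mem_filter.1 ht).2) hts

theorem totalDegree_monomial_sub_monomial {S : Type*} [CommRing S] [Nontrivial S] (huv : u ≠ v)
    (hdeg : v.degree = u.degree) :
    (monomial u 1 - monomial v 1 : MvPolynomial σ S).totalDegree = u.degree :=
  ((isHomogeneous_monomial 1 rfl).sub (isHomogeneous_monomial 1 hdeg)).totalDegree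
    (sub_ne_zero.2 fun h => huv (monomial_left_injective one_ne_zero h))

namespace IsIndispensablePair

theorem fiber_subsingleton (h : IsIndispensablePair a u v) {r s t : σ →₀ ℕ} (hu : r + s = u)
    (hr : r ≠ 0)
    (ht : Finsupp.linearCombination ℕ a t = Finsupp.linearCombination ℕ a s) : t = s := by
  have hrt : Finsupp.linearCombination ℕ a (r + t) = Finsupp.linearCombination ℕ a u := by
    rw [← hu, map_add, map_add, ht]
  rcases (h.fiber_eq _).1 hrt with htu | htv
  · exact add_left_cancel (htu.trans hu.symm)
  · exact absurd (le_bot_iff.1 (h.disjoint (hu ▸ le_self_add) (htv ▸ le_self_add))) hr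

theorem coeff_mul (h : IsIndispensablePair a u v) (hg : toricMap R a g = 0)
    (p : MvPolynomial σ R) : coeff u (p * g) = constantCoeff p * coeff u g := by
  classical
  rw [MvPolynomial.coeff_mul, sum_eq_single_of_mem (0, u) (by simp)]
  · rfl
  · rintro ⟨r, s⟩ hrs hne
    rw [HasAntidiagonal.mem_antidiagonal] at hrs
    have hr : r ≠ 0 := by
      rintro rfl
      exact hne (by simpa using hrs)
    rw [coeff_eq_zero_of_fiber_subsingleton (fun t => h.fiber_subsingleton hrs hr) hg, mul_zero]

variable (R) in
/-- The elements of the toric ideal with no term `x ^ u`. They form an ideal, and it contains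
both `𝔪 * I` and every element of `I` of degree less than that of `x ^ u`. -/
def coeffZeroIdeal (h : IsIndispensablePair a u v) :
    Ideal (MvPolynomial σ R) where
  carrier := {g | toricMap R a g = 0 ∧ coeff u g = 0}
  add_mem' hf hg := ⟨by rw [map_add, hf.1, hg.1, add_zero], by rw [coeff_add, hf.2, hg.2, add_zero]⟩
  zero_mem' := ⟨map_zero _, coeff_zero _⟩
  smul_mem' p g hg := ⟨by rw [smul_eq_mul, map_mul, hg.1, mul_zero],
    by rw [smul_eq_mul, h.coeff_mul hg.1, hg.2, mul_zero]⟩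

theorem idealOfVars_mul_ker_le (h : IsIndispensablePair a u v) :
    idealOfVars σ R * RingHom.ker (toricMap R a) ≤ h.coeffZeroIdeal R := by
  refine Ideal.mul_le.2 fun p hp g hg => ⟨by rw [map_mul, RingHom.mem_ker.1 hg, mul_zero], ?_⟩
  have hp₀ : p ∈ RingHom.ker constantCoeff :=
    Ideal.span_le.2 (Set.range_subset_iff.2 fun i => constantCoeff_X R i) hp
  rw [h.coeff_mul hg, RingHom.mem_ker.1 hp₀, zero_mul]

theorem span_totalDegree_le_le (h : IsIndispensablePair a u v) {d : ℕ} (hd : d < u.degree) :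
    Ideal.span {f | f ∈ RingHom.ker (toricMap R a) ∧ f.totalDegree ≤ d} ≤ h.coeffZeroIdeal R :=
  Ideal.span_le.2 fun _ hf => ⟨hf.1, coeff_eq_zero_of_totalDegree_lt (hf.2.trans_lt hd)⟩

theorem binomial_mem_ker {S : Type*} [CommRing S] (h : IsIndispensablePair a u v) :
    monomial u 1 - monomial v 1 ∈ RingHom.ker (toricMap S a) := by
  rw [RingHom.mem_ker, map_sub, toricMap_monomial, toricMap_monomial,
    (h.fiber_eq v).2 (Or.inr rfl), sub_self]

theorem binomial_notMem_coeffZeroIdeal {S : Type*} [CommRing S] [Nontrivial S]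
    (h : IsIndispensablePair a u v) (hu : u ≠ 0) :
    monomial u 1 - monomial v 1 ∉ h.coeffZeroIdeal S := by
  classical
  rintro ⟨-, hcoeff⟩
  simp [coeff_monomial, (h.disjoint.ne hu).symm] at hcoeff

end IsIndispensablePair

end ToricMap

section Graph

variable {V : Type} [Fintype V] (G : SimpleGraph V)

open scoped Classical in
/-- The exponent vector of the monomial `φ_G(p_I)`. -/
noncomputable def marginal (I : V → Bool) : Sym2 (V × Bool) ⊕ (V × Bool) →₀ ℕ :=
  ∑ e ∈ G.edgeFinset, Finsupp.single (Sum.inl (e.map fun v => (v, I v))) 1 +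
    ∑ l with ∀ k, ¬ G.Adj l k, Finsupp.single (Sum.inr (l, I l)) 1

theorem phi_eq_toricMap : phi G = toricMap ℂ (marginal G) := by
  refine MvPolynomial.algHom_ext fun I => ?_
  rw [phi, toricMap, aeval_X, aeval_X, marginal, ← one_mul (1 : ℂ), ← monomial_mul,
    monomial_sum_one, monomial_sum_one]
  congr!

theorem exists_genInDegLE : ∃ d, GenInDegLE G d := by
  obtain ⟨S, hS⟩ := IsNoetherian.noetherian (toricIdeal G)
  refine ⟨S.sup totalDegree, le_antisymm ?_ (Ideal.span_le.2 fun _ hg => hg.1)⟩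
  conv_lhs => rw [← hS]
  exact Submodule.span_mono fun g hg =>
    ⟨hS ▸ Submodule.subset_span hg, Finset.le_sup (f := totalDegree) hg⟩

namespace IsIndispensablePair

variable {G} {u v : (V → Bool) →₀ ℕ}

theorem not_genInDegLE (h : IsIndispensablePair (marginal G) u v) {d : ℕ} (hd : d < u.degree) :
    ¬ GenInDegLE G d := by
  intro hgen
  rw [GenInDegLE, toricIdeal, phi_eq_toricMap] at hgen
  exact h.binomial_notMem_coeffZeroIdeal (by rintro rfl; simp at hd)
    (h.span_totalDegree_le_le hd (hgen.le h.binomial_mem_ker))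

theorem isMinimalGenerator (h : IsIndispensablePair (marginal G) u v) (hu : u ≠ 0) :
    IsMinimalGenerator G (monomial u 1 - monomial v 1) := by
  rw [IsMinimalGenerator, toricIdeal, phi_eq_toricMap]
  exact ⟨h.binomial_mem_ker,
    fun hmem => h.binomial_notMem_coeffZeroIdeal hu (h.idealOfVars_mul_ker_le hmem)⟩

theorem degree_le_markovWidth (h : IsIndispensablePair (marginal G) u v) :
    u.degree ≤ markovWidth G :=
  not_lt.1 fun hlt => h.not_genInDegLE hlt (Nat.sInf_mem (exists_genInDegLE G))

end IsIndispensablePair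

theorem marginal_inl (I : V → Bool) (j k : V) (a b : Bool) [Decidable (G.Adj j k)] :
    marginal G I (Sum.inl s((j, a), (k, b))) = if G.Adj j k ∧ I j = a ∧ I k = b then 1 else 0 := by
  classical
  have hmap : ∀ e : Sym2 V, e.map (fun v => (v, I v)) = s((j, a), (k, b)) ↔
      s(j, k) = e ∧ I j = a ∧ I k = b := by
    refine fun e => e.ind fun x y => ?_
    simp only [Sym2.map_mk, Sym2.eq_iff, Prod.mk.injEq]
    grind
  simp only [marginal, Finsupp.add_apply, Finsupp.finsetSum_apply, Finsupp.single_apply,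
    Sum.inl.injEq, hmap, ite_and, sum_ite_eq, reduceCtorEq, if_false, sum_const_zero, add_zero,
    SimpleGraph.mem_edgeFinset, SimpleGraph.mem_edgeSet]

theorem marginal_inr (I : V → Bool) (l : V) (a : Bool) [Decidable (∀ k, ¬ G.Adj l k)] :
    marginal G I (Sum.inr (l, a)) = if (∀ k, ¬ G.Adj l k) ∧ I l = a then 1 else 0 := by
  classical
  have hpair : ∀ x, (x, I x) = (l, a) ↔ l = x ∧ I l = a := by grind
  simp only [marginal, Finsupp.add_apply, Finsupp.finsetSum_apply, Finsupp.single_apply,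
    Sum.inr.injEq, hpair, ite_and, sum_ite_eq, reduceCtorEq, if_false, sum_const_zero, zero_add,
    mem_filter, mem_univ, true_and]

theorem linearCombination_marginal_inl [DecidableEq V] (t : (V → Bool) →₀ ℕ) (j k : V)
    (a b : Bool) [Decidable (G.Adj j k)] :
    Finsupp.linearCombination ℕ (marginal G) t (Sum.inl s((j, a), (k, b))) =
      if G.Adj j k then ∑ I, if I j = a ∧ I k = b then t I else 0 else 0 := by
  rw [Finsupp.linearCombination_apply, Finsupp.sum_fintype _ _ (by simp)]
  simp [marginal_inl, ite_and]

theorem linearCombination_marginal_inr [DecidableEq V] (t : (V → Bool) →₀ ℕ) (l : V) (a : Bool)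
    [Decidable (∀ k, ¬ G.Adj l k)] :
    Finsupp.linearCombination ℕ (marginal G) t (Sum.inr (l, a)) =
      if ∀ k, ¬ G.Adj l k then ∑ I, if I l = a then t I else 0 else 0 := by
  rw [Finsupp.linearCombination_apply, Finsupp.sum_fintype _ _ (by simp)]
  simp [marginal_inr, ite_and]

theorem linearCombination_marginal_eq_iff [DecidableEq V] (s t : (V → Bool) →₀ ℕ) :
    Finsupp.linearCombination ℕ (marginal G) s = Finsupp.linearCombination ℕ (marginal G) t ↔
      MarginalsEq G (fun I => s I) (fun I => t I) := by
  classical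
  simp only [Finsupp.ext_iff, Sum.forall, Sym2.forall, Prod.forall, MarginalsEq,
    linearCombination_marginal_inl, linearCombination_marginal_inr]
  norm_cast
  refine ⟨fun h => ⟨fun j k hjk a b => ?_, fun l hl a => ?_⟩,
    fun h => ⟨fun j a k b => ?_, fun l a => ?_⟩⟩
  · simpa only [if_pos hjk] using h.1 j a k b
  · simpa only [if_pos hl] using h.2 l a
  · split_ifs with hjk
    exacts [h.1 j k hjk a b, rfl]
  · split_ifs with hl
    exacts [h.2 l hl a, rfl]

end Graph

section Cube

variable {α : Type*} [DecidableEq α]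

/-- The neighbor of the cube vertex `x` across the edge in direction `j`. -/
def flipAt (j : α) (x : α → Bool) : α → Bool :=
  Function.update x j (!x j)

theorem flipAt_self (j : α) (x : α → Bool) : flipAt j x j = !x j :=
  Function.update_self ..

theorem flipAt_of_ne {j l : α} (h : l ≠ j) (x : α → Bool) : flipAt j x l = x l :=
  Function.update_of_ne h ..

theorem flipAt_involutive (j : α) : Function.Involutive (flipAt j) := fun x => by
  simp [flipAt]

theorem ne_flipAt (j : α) (x : α → Bool) : x ≠ flipAt j x := fun h => by
  simpa [flipAt_self] using congrFun h j

theorem eq_or_eq_flipAt {j : α} {x y : α → Bool} (h : ∀ l ≠ j, y l = x l) :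
    y = x ∨ y = flipAt j x := by
  rw [flipAt, Function.eq_update_iff]
  by_cases hj : y j = x j
  · exact Or.inl (funext fun l => if hl : l = j then hl ▸ hj else h l hl)
  · exact Or.inr ⟨Bool.eq_not.2 hj, h⟩

theorem flipAt_induction [Finite α] {P : (α → Bool) → Prop} (x₀ : α → Bool) (base : P x₀)
    (step : ∀ j x, P x → P (flipAt j x)) (x : α → Bool) : P x := by
  cases nonempty_fintype α
  suffices h : ∀ s : Finset α, P (s.piecewise x x₀) by simpa using h univ
  intro s
  induction s using Finset.induction_on with
  | empty => simpa using base
  | insert j s _ ih =>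
    rw [piecewise_insert]
    by_cases hj : x j = s.piecewise x x₀ j
    · rwa [hj, Function.update_eq_self]
    · rw [Bool.eq_not.2 hj]
      exact step j _ ih

variable [Fintype α]

/-- The parity of the number of coordinates equal to `true`, as a sum in the ring `Bool`, whose
addition is `xor`. -/
def parity (x : α → Bool) : Bool :=
  ∑ i, x i

theorem parity_flipAt (j : α) (x : α → Bool) : parity (flipAt j x) = !parity x := by
  rw [parity, parity, flipAt, sum_update_of_mem (mem_univ j), ← add_sum_erase _ x (mem_univ j),
    ← erase_eq]
  exact Bool.not_xor ..

theorem card_parity_eq [Nonempty α] (p : Bool) :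
    #{x : α → Bool | parity x = p} = 2 ^ (Fintype.card α - 1) := by
  obtain ⟨j⟩ := ‹Nonempty α›
  have hflip : #{x : α → Bool | parity x = p} = #{x : α → Bool | ¬ parity x = p} := by
    refine card_equiv (flipAt_involutive j).toPerm fun x => ?_
    simp [parity_flipAt]
  have hcube : 2 * #{x : α → Bool | parity x = p} = 2 * 2 ^ (Fintype.card α - 1) := by
    rw [mul_pow_sub_one Fintype.card_ne_zero, two_mul]
    nth_rw 2 [hflip]
    simp [card_filter_add_card_filter_not]
  omega

theorem card_filter_parity_pair (j : α) (x : α → Bool) (p : Bool) :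
    #{y ∈ {x, flipAt j x} | parity y = p} = 1 := by
  rw [filter_insert, filter_singleton, parity_flipAt]
  cases parity x <;> cases p <;> simp

theorem exists_eq_indicator_parity [Nonempty α] {f : (α → Bool) → ℕ}
    (hf : ∀ j x, f x + f (flipAt j x) = 1) : ∃ p, ∀ x, f x = if parity x = p then 1 else 0 := by
  obtain ⟨i⟩ := ‹Nonempty α›
  let x₀ : α → Bool := fun _ => false
  refine ⟨if f x₀ = 1 then parity x₀ else !parity x₀, flipAt_induction x₀ ?_ fun j x hx => ?_⟩
  · have := hf i x₀
    grind
  · have := hf j x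
    have := parity_flipAt j x
    grind

theorem add_flipAt_eq_one {f : (α → Bool) → ℕ} (hsum : ∑ x, f x = 2 ^ (Fintype.card α - 1))
    {j : α} (hf : ∀ x, 1 ≤ f x + f (flipAt j x)) (x : α → Bool) : f x + f (flipAt j x) = 1 := by
  have : Nonempty α := ⟨j⟩
  have hflip : ∑ x, f (flipAt j x) = ∑ x, f x := Equiv.sum_comp (flipAt_involutive j).toPerm f
  have htotal : ∑ _x : α → Bool, 1 = ∑ x, (f x + f (flipAt j x)) := by
    rw [sum_add_distrib, hflip, hsum, ← two_mul, mul_pow_sub_one Fintype.card_ne_zero]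
    simp
  exact ((sum_eq_sum_iff_of_le fun x _ => hf x).1 htotal x (mem_univ x)).symm

end Cube

section Face

/-- A `d`-dimensional face of the cube `{0,1}^α`: the set of its `d` free directions together with
the values of the remaining coordinates. -/
def CubeFace (α : Type*) (d : ℕ) : Type _ :=
  Σ D : {D : Finset α // #D = d}, ({l // l ∉ D.1} → Bool)

namespace CubeFace

variable {α : Type*} {d : ℕ} {F : CubeFace α d} {x y : α → Bool}

/-- The free directions of a face. -/
def dirs (F : CubeFace α d) : Finset α :=
  F.1.1

/-- A vertex of the cube lies in a face when its coordinates off the free directions are the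
prescribed ones. -/
instance : Membership (α → Bool) (CubeFace α d) :=
  ⟨fun F x => ∀ l : {l // l ∉ F.dirs}, x l = F.2 l⟩

/-- The face through the vertex `x` with free directions `D`. -/
def through (D : Finset α) (hD : #D = d) (x : α → Bool) : CubeFace α d :=
  ⟨⟨D, hD⟩, fun l => x l⟩

theorem card_dirs (F : CubeFace α d) : #F.dirs = d :=
  F.1.2

theorem mem_iff : x ∈ F ↔ ∀ l : {l // l ∉ F.dirs}, x l = F.2 l :=
  Iff.rfl

theorem eq_of_mem (hx : x ∈ F) (hy : y ∈ F) {l : α} (hl : l ∉ F.dirs) : y l = x l :=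
  (hy ⟨l, hl⟩).trans (hx ⟨l, hl⟩).symm

theorem mem_through (D : Finset α) (hD : #D = d) (x : α → Bool) : x ∈ through D hD x :=
  fun _ => rfl

theorem dirs_through (D : Finset α) (hD : #D = d) (x : α → Bool) : (through D hD x).dirs = D :=
  rfl

theorem exists_mem_dirs_ne (S : CubeFace α 2) (i : α) : ∃ j ∈ S.dirs, j ≠ i :=
  exists_mem_ne (S.card_dirs.symm ▸ one_lt_two) i

variable [DecidableEq α]

theorem flipAt_mem_iff {j : α} (hj : j ∈ F.dirs) : flipAt j x ∈ F ↔ x ∈ F := by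
  refine forall_congr' fun l => ?_
  rw [flipAt_of_ne (by rintro rfl; exact l.2 hj)]

theorem eq_or_eq_flipAt_of_mem {S : CubeFace α 2} {i j : α} (hi : i ∈ S.dirs) (hj : j ∈ S.dirs)
    (hij : i ≠ j) (hx : x ∈ S) (hy : y ∈ S) (hxy : y i = x i) : y = x ∨ y = flipAt j x := by
  have hdirs : {i, j} = S.dirs :=
    eq_of_subset_of_card_le (by simp [insert_subset_iff, hi, hj]) (by rw [card_dirs, card_pair hij])
  refine eq_or_eq_flipAt fun l hlj => ?_
  by_cases hli : l = i
  · rwa [hli]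
  · exact eq_of_mem hx hy (by simp [← hdirs, hli, hlj])

theorem filter_mem_eq_pair [Fintype α] {S : CubeFace α 2} [DecidablePred (· ∈ S)] {i j : α}
    (hi : i ∈ S.dirs) (hj : j ∈ S.dirs) (hij : i ≠ j) (hx : x ∈ S) :
    ({y | y i = x i ∧ y ∈ S} : Finset (α → Bool)) = {x, flipAt j x} := by
  ext y
  simp only [mem_filter, mem_univ, true_and, mem_insert, mem_singleton]
  refine ⟨fun h => eq_or_eq_flipAt_of_mem hi hj hij hx h.2 h.1, ?_⟩
  rintro (rfl | rfl)
  exacts [⟨rfl, hx⟩, ⟨flipAt_of_ne hij x, (flipAt_mem_iff hj).2 hx⟩]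

instance [Fintype α] : Fintype (CubeFace α d) :=
  inferInstanceAs (Fintype (Σ _, _))

end CubeFace

theorem card_cubeFace (α : Type*) [Fintype α] [DecidableEq α] (d : ℕ) :
    Fintype.card (CubeFace α d) = (Fintype.card α).choose d * 2 ^ (Fintype.card α - d) := by
  have hvalues (D : {D : Finset α // #D = d}) :
      Fintype.card ({l // l ∉ D.1} → Bool) = 2 ^ (Fintype.card α - d) := by
    rw [Fintype.card_fun, Fintype.card_bool, Fintype.card_subtype_compl, Fintype.card_coe, D.2]
  refine Fintype.card_sigma.trans ?_
  simp [hvalues, Fintype.card_finset_len]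

/-- Every edge of the cube `{0,1}^α` is an edge of one of the squares `F k`. -/
def CoversEdges {α β : Type*} (F : β → CubeFace α 2) : Prop :=
  ∀ (x : α → Bool) (j : α), ∃ k, x ∈ F k ∧ j ∈ (F k).dirs

theorem exists_coversEdges {α β : Type*} [Fintype α] [Fintype β] (hα : 2 ≤ Fintype.card α)
    (hβ : (Fintype.card α).choose 2 * 2 ^ (Fintype.card α - 2) ≤ Fintype.card β) :
    ∃ F : β → CubeFace α 2, CoversEdges F := by
  classical
  have : Nontrivial α := Fintype.one_lt_card_iff_nontrivial.1 hα
  have exists_square (x : α → Bool) (j : α) : ∃ S : CubeFace α 2, x ∈ S ∧ j ∈ S.dirs := by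
    obtain ⟨i, hij⟩ := exists_ne j
    exact ⟨.through {i, j} (card_pair hij) x, CubeFace.mem_through _ _ x, by
      simp [CubeFace.dirs_through]⟩
  have : Nonempty (CubeFace α 2) := by
    obtain ⟨j⟩ := Nontrivial.to_nonempty (α := α)
    exact (exists_square (fun _ => false) j).nonempty
  obtain ⟨e⟩ := Function.Embedding.nonempty_of_card_le ((card_cubeFace α 2).trans_le hβ)
  refine ⟨Function.invFun e, fun x j => ?_⟩
  obtain ⟨S, hS⟩ := exists_square x j
  obtain ⟨k, rfl⟩ := Function.invFun_surjective e.injective S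
  exact ⟨k, hS⟩

end Face

section EdgeCount

variable {α β : Type} [Fintype α] [Fintype β] [DecidableEq α] [DecidableEq β]

/-- The two-way marginal of the table `t` on `{0,1}^(α ⊕ β)` at the edge `{i, k}` of the complete
bipartite graph and the labels `a`, `b` of its endpoints. -/
def edgeCount (t : (α ⊕ β → Bool) →₀ ℕ) (i : α) (k : β) (a b : Bool) : ℕ :=
  ∑ I : α ⊕ β → Bool with I (.inl i) = a ∧ I (.inr k) = b, t I

theorem marginalsEq_completeBipartiteGraph_iff [Nonempty α] [Nonempty β]
    (s t : (α ⊕ β → Bool) →₀ ℕ) :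
    MarginalsEq (completeBipartiteGraph α β) (fun I => s I) (fun I => t I) ↔
      edgeCount s = edgeCount t := by
  simp only [MarginalsEq, funext_iff, edgeCount, ← sum_filter]
  norm_cast
  refine ⟨fun h i k a b => h.1 (.inl i) (.inr k) (by simp) a b, fun h => ⟨?_, ?_⟩⟩
  · rintro (i | k) (i' | k') hadj a b
    · simp at hadj
    · exact h i k' a b
    · simpa only [and_comm] using h i' k b a
    · simp at hadj
  · obtain ⟨i⟩ := ‹Nonempty α›
    obtain ⟨k⟩ := ‹Nonempty β›
    rintro (i' | k') hisolated
    · exact absurd (hisolated (.inr k)) (by simp)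
    · exact absurd (hisolated (.inl i)) (by simp)

theorem linearCombination_marginal_completeBipartiteGraph_eq_iff [Nonempty α] [Nonempty β]
    (s t : (α ⊕ β → Bool) →₀ ℕ) :
    Finsupp.linearCombination ℕ (marginal (completeBipartiteGraph α β)) s =
      Finsupp.linearCombination ℕ (marginal (completeBipartiteGraph α β)) t ↔
      edgeCount s = edgeCount t :=
  (linearCombination_marginal_eq_iff ..).trans (marginalsEq_completeBipartiteGraph_iff s t)

/-- The marginal of the table `t` on the left vertices. -/
def leftCount (t : (α ⊕ β → Bool) →₀ ℕ) (x : α → Bool) : ℕ :=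
  ∑ I with I ∘ Sum.inl = x, t I

/-- The marginal of the table `t` on the left vertices and the right vertex `k`, restricted to the
label `true` of `k`. -/
def trueCount (t : (α ⊕ β → Bool) →₀ ℕ) (k : β) (x : α → Bool) : ℕ :=
  ∑ I with I ∘ Sum.inl = x ∧ I (.inr k) = true, t I

variable (t : (α ⊕ β → Bool) →₀ ℕ)

theorem trueCount_le_leftCount (k : β) (x : α → Bool) : trueCount t k x ≤ leftCount t x :=
  sum_le_sum_of_subset (monotone_filter_right _ fun _ _ h => h.1)

theorem sum_trueCount (i : α) (k : β) (a : Bool) :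
    ∑ x with x i = a, trueCount t k x = edgeCount t i k a true := by
  simp only [trueCount, edgeCount]
  simp_rw [and_comm, ← filter_filter (fun I : α ⊕ β → Bool => I (.inr k) = true)]
  rw [sum_fiberwise_eq_sum_filter]
  simp [filter_filter, and_comm]

theorem sum_leftCount : ∑ x, leftCount t x = t.degree := by
  rw [Finsupp.degree_eq_sum]
  exact sum_fiberwise _ _ _

theorem sum_edgeCount (i : α) (k : β) : ∑ a, ∑ b, edgeCount t i k a b = t.degree := by
  simp only [edgeCount, ← filter_filter, sum_fiberwise, Finsupp.degree_eq_sum]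

variable {t} in
theorem degree_eq_of_edgeCount_eq [Nonempty α] [Nonempty β] {s : (α ⊕ β → Bool) →₀ ℕ}
    (h : edgeCount s = edgeCount t) : s.degree = t.degree := by
  obtain ⟨i⟩ := ‹Nonempty α›
  obtain ⟨k⟩ := ‹Nonempty β›
  rw [← sum_edgeCount s i k, h, sum_edgeCount]

end EdgeCount

section Labeling

variable {α β : Type*} (F : β → CubeFace α 2) (x : α → Bool)

open scoped Classical in
/-- The labeling of the complete bipartite graph which is `x` on the left vertices and on the right
vertex `k` records whether `x` lies in the square `F k`. -/
noncomputable def labeling : α ⊕ β → Bool :=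
  Sum.elim x fun k => decide (x ∈ F k)

theorem labeling_inl (i : α) : labeling F x (.inl i) = x i :=
  rfl

theorem labeling_comp_inl : labeling F x ∘ Sum.inl = x :=
  Sum.elim_comp_inl ..

theorem labeling_inr_eq_true_iff (k : β) : labeling F x (.inr k) = true ↔ x ∈ F k := by
  simp [labeling]

theorem labeling_flipAt_inr [DecidableEq α] {j : α} {k : β} (hj : j ∈ (F k).dirs) :
    labeling F (flipAt j x) (.inr k) = labeling F x (.inr k) := by
  rw [Bool.eq_iff_iff, labeling_inr_eq_true_iff, labeling_inr_eq_true_iff,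
    CubeFace.flipAt_mem_iff hj]

end Labeling

section ParityTable

variable {α β : Type} [Fintype α] [DecidableEq α] (F : β → CubeFace α 2)

/-- The table consisting of one copy of the labeling of each cube vertex of parity `p`. -/
noncomputable def parityTable (p : Bool) : (α ⊕ β → Bool) →₀ ℕ :=
  ∑ x with parity x = p, Finsupp.single (labeling F x) 1

theorem degree_parityTable [Nonempty α] (p : Bool) :
    (parityTable F p).degree = 2 ^ (Fintype.card α - 1) := by
  rw [← card_parity_eq p, card_eq_sum_ones]
  simp [parityTable]

open scoped Classical in
theorem parityTable_apply (p : Bool) (I : α ⊕ β → Bool) :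
    parityTable F p I =
      if I = labeling F (I ∘ Sum.inl) ∧ parity (I ∘ Sum.inl) = p then 1 else 0 := by
  have hlabeling (x : α → Bool) :
      labeling F x = I ↔ I ∘ Sum.inl = x ∧ I = labeling F (I ∘ Sum.inl) := by
    refine ⟨?_, fun h => h.1 ▸ h.2.symm⟩
    rintro rfl
    simp [labeling_comp_inl]
  simp only [parityTable, Finsupp.finsetSum_apply, Finsupp.single_apply, hlabeling, ite_and,
    sum_ite_eq, mem_filter, mem_univ, true_and]
  split_ifs <;> rfl

theorem disjoint_parityTable {p q : Bool} (hpq : p ≠ q) :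
    Disjoint (parityTable F p) (parityTable F q) := by
  classical
  rw [Finsupp.disjoint_iff, Finset.disjoint_left]
  simp only [Finsupp.mem_support_iff, parityTable_apply]
  grind

variable [Fintype β] [DecidableEq β]

theorem edgeCount_parityTable (p : Bool) (i : α) (k : β) (a b : Bool) :
    edgeCount (parityTable F p) i k a b =
      #{x | (x i = a ∧ labeling F x (.inr k) = b) ∧ parity x = p} := by
  simp only [edgeCount, parityTable, Finsupp.finsetSum_apply, Finsupp.single_apply]
  rw [sum_comm]
  simp only [sum_ite_eq, mem_filter, mem_univ, true_and, labeling_inl, ← card_filter, filter_filter,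
    and_comm]

theorem edgeCount_parityTable_eq (p q : Bool) :
    edgeCount (parityTable F p) = edgeCount (parityTable F q) := by
  obtain rfl | rfl := Bool.eq_or_eq_not q p
  · rfl
  ext i k a b
  obtain ⟨j, hj, hji⟩ := (F k).exists_mem_dirs_ne i
  rw [edgeCount_parityTable, edgeCount_parityTable]
  refine card_equiv (flipAt_involutive j).toPerm fun x => ?_
  simp [parity_flipAt, flipAt_of_ne hji.symm, labeling_flipAt_inr F x hj]

end ParityTable

section Fiber

variable {α β : Type} [Fintype α] [DecidableEq α] [Fintype β] [DecidableEq β]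
  {F : β → CubeFace α 2} {t : (α ⊕ β → Bool) →₀ ℕ} {p : Bool} {x : α → Bool} {j : α} {k : β}

theorem trueCount_eq_zero (ht : edgeCount t = edgeCount (parityTable F p)) (hx : x ∉ F k) :
    trueCount t k x = 0 := by
  classical
  simp only [CubeFace.mem_iff, not_forall] at hx
  obtain ⟨i, hne⟩ := hx
  have hcount : ∑ y with y i = x i, trueCount t k y = 0 := by
    rw [sum_trueCount, ht, edgeCount_parityTable, card_eq_zero, filter_eq_empty_iff]
    simp only [labeling_inr_eq_true_iff]
    exact fun y _ hy => hne (hy.1.1 ▸ hy.1.2 i)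
  exact sum_eq_zero_iff.1 hcount x (by simp)

theorem trueCount_add_flipAt_eq_one (ht : edgeCount t = edgeCount (parityTable F p)) (hx : x ∈ F k)
    (hj : j ∈ (F k).dirs) : trueCount t k x + trueCount t k (flipAt j x) = 1 := by
  classical
  obtain ⟨i, hi, hij⟩ := (F k).exists_mem_dirs_ne j
  have hpair := CubeFace.filter_mem_eq_pair hi hj hij hx
  calc trueCount t k x + trueCount t k (flipAt j x)
      = ∑ y with y i = x i ∧ y ∈ F k, trueCount t k y := by
        rw [hpair, sum_pair (ne_flipAt j x)]
    _ = ∑ y with y i = x i, trueCount t k y := by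
        rw [← filter_filter]
        exact sum_filter_of_ne fun y _ hy => not_not.1 (mt (trueCount_eq_zero ht) hy)
    _ = #{y | (y i = x i ∧ y ∈ F k) ∧ parity y = p} := by
        rw [sum_trueCount, ht, edgeCount_parityTable]
        simp only [labeling_inr_eq_true_iff]
    _ = 1 := by
        rw [← filter_filter, hpair, card_filter_parity_pair]

theorem leftCount_add_flipAt_eq_one (hF : CoversEdges F)
    (ht : edgeCount t = edgeCount (parityTable F p)) (j : α) (x : α → Bool) :
    leftCount t x + leftCount t (flipAt j x) = 1 := by
  have : Nonempty α := ⟨j⟩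
  have : Nonempty β := ⟨(hF x j).choose⟩
  refine add_flipAt_eq_one ?_ (fun y => ?_) x
  · rw [sum_leftCount, degree_eq_of_edgeCount_eq ht, degree_parityTable]
  · obtain ⟨k, hy, hj⟩ := hF y j
    exact (trueCount_add_flipAt_eq_one ht hy hj).ge.trans
      (add_le_add (trueCount_le_leftCount ..) (trueCount_le_leftCount ..))

theorem trueCount_eq_leftCount (hF : CoversEdges F)
    (ht : edgeCount t = edgeCount (parityTable F p)) (hx : x ∈ F k) :
    trueCount t k x = leftCount t x := by
  obtain ⟨j, hj⟩ : (F k).dirs.Nonempty := card_pos.1 ((F k).card_dirs.symm ▸ two_pos)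
  have htrue := trueCount_add_flipAt_eq_one ht hx hj
  have hleft := leftCount_add_flipAt_eq_one hF ht j x
  have := trueCount_le_leftCount t k x
  have := trueCount_le_leftCount t k (flipAt j x)
  omega

theorem eq_labeling_of_apply_ne_zero (hF : CoversEdges F)
    (ht : edgeCount t = edgeCount (parityTable F p)) {I : α ⊕ β → Bool} (hI : t I ≠ 0) :
    I = labeling F (I ∘ Sum.inl) := by
  ext (i | k)
  · rfl
  rw [Bool.eq_iff_iff, labeling_inr_eq_true_iff]
  refine ⟨fun hk => ?_, fun hmem => ?_⟩
  · by_contra hmem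
    exact hI (sum_eq_zero_iff.1 (trueCount_eq_zero ht hmem) I (by simp [hk]))
  · by_contra hk
    refine (trueCount_eq_leftCount hF ht hmem).not_lt
      (sum_lt_sum_of_subset (monotone_filter_right _ fun _ _ h => h.1) (i := I) (by simp)
        (by simp [hk]) (Nat.pos_of_ne_zero hI) fun _ _ _ => Nat.zero_le _)

theorem leftCount_eq_apply_labeling (hF : CoversEdges F)
    (ht : edgeCount t = edgeCount (parityTable F p)) (x : α → Bool) :
    leftCount t x = t (labeling F x) := by
  refine sum_eq_single_of_mem _ (by simp [labeling_comp_inl]) fun I hI hne => ?_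
  by_contra hIt
  rw [← (mem_filter.1 hI).2] at hne
  exact hne (eq_labeling_of_apply_ne_zero hF ht hIt)

theorem exists_eq_parityTable [Nonempty α] (hF : CoversEdges F)
    (ht : edgeCount t = edgeCount (parityTable F p)) : ∃ q, t = parityTable F q := by
  obtain ⟨q, hq⟩ := exists_eq_indicator_parity (leftCount_add_flipAt_eq_one hF ht)
  refine ⟨q, Finsupp.ext fun I => ?_⟩
  rw [parityTable_apply, ite_and, ← hq, leftCount_eq_apply_labeling hF ht]
  split_ifs with hI
  · rw [← hI]
  · exact not_not.1 (mt (eq_labeling_of_apply_ne_zero hF ht) hI)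

omit [DecidableEq β] in
theorem isIndispensablePair_parityTable [Nonempty α] (hF : CoversEdges F) :
    IsIndispensablePair (marginal (completeBipartiteGraph α β))
      (parityTable F true) (parityTable F false) where
  fiber_eq t := by
    classical
    have : Nonempty β := ⟨(hF (fun _ => false) (Classical.arbitrary α)).choose⟩
    rw [linearCombination_marginal_completeBipartiteGraph_eq_iff]
    constructor
    · intro ht
      obtain ⟨q, rfl⟩ := exists_eq_parityTable hF ht
      cases q <;> simp
    · rintro (rfl | rfl)
      exacts [rfl, edgeCount_parityTable_eq F _ _]
  disjoint := disjoint_parityTable F (by decide)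

end Fiber

theorem completeBipartite_large_degree_general {α β : Type} [Fintype α] [Fintype β] [Nonempty α]
    {F : β → CubeFace α 2} (hF : CoversEdges F) :
    ¬ GenInDegLE (completeBipartiteGraph α β) (2 ^ (Fintype.card α - 1) - 1) ∧
    (∃ f : MvPolynomial (α ⊕ β → Bool) ℂ,
      IsMinimalGenerator (completeBipartiteGraph α β) f ∧
        f.totalDegree = 2 ^ (Fintype.card α - 1)) ∧
    2 ^ (Fintype.card α - 1) ≤ markovWidth (completeBipartiteGraph α β) := by
  classical
  have hpair := isIndispensablePair_parityTable hF
  have hdeg := degree_parityTable F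
  have hpos : 0 < 2 ^ (Fintype.card α - 1) := Nat.two_pow_pos _
  have hne : parityTable F true ≠ 0 := fun h =>
    hpos.ne (by rw [← hdeg true, h, map_zero])
  refine ⟨hpair.not_genInDegLE ?_, ⟨_, hpair.isMinimalGenerator hne, ?_⟩, ?_⟩
  · rw [hdeg]
    exact Nat.sub_one_lt_of_lt hpos
  · rw [totalDegree_monomial_sub_monomial (hpair.disjoint.ne hne) (by rw [hdeg, hdeg]), hdeg]
  · rw [← hdeg true]
    exact hpair.degree_le_markovWidth

/-- for `m ≥ 2` and `n ≥ C(m,2)·2^{m-2}`, the toric ideal of `K_{m,n}` is not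
generated in degree `≤ 2^{m-1} - 1`; it has a minimal generator of degree `2^{m-1}` and
`μ(K_{m,n}) ≥ 2^{m-1}`. -/
theorem completeBipartite_large_degree (m n : ℕ) (hm : 2 ≤ m)
    (hn : Nat.choose m 2 * 2 ^ (m - 2) ≤ n) :
    ¬ GenInDegLE (completeBipartiteGraph (Fin m) (Fin n)) (2 ^ (m - 1) - 1) ∧
    (∃ f : MvPolynomial ((Fin m ⊕ Fin n) → Bool) ℂ,
      IsMinimalGenerator (completeBipartiteGraph (Fin m) (Fin n)) f ∧
        f.totalDegree = 2 ^ (m - 1)) ∧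
    2 ^ (m - 1) ≤ markovWidth (completeBipartiteGraph (Fin m) (Fin n)) := by
  have : NeZero m := ⟨by omega⟩
  obtain ⟨F, hF⟩ := exists_coversEdges (α := Fin m) (β := Fin n) (by simpa) (by simpa)
  simpa using completeBipartite_large_degree_general hF

end BinaryGraphModels
end

section
/- Let G be a finite simple graph on vertex set V, let v ∈ V, and let f = ∏_{j=1}^{d} p_{I_j} − ∏_{j=1}^{d} p_{J_j} be a nonzero binomial in I_G such that all 2d index strings I₁,…,I_d, J₁,…,J_d take the same common value c ∈ {0,1} at v. Let G' be the induced subgraph of G on V∖{v} and let f̃ = ∏_{j=1}^{d} p_{I_j|_{V∖{v}}} − ∏_{j=1}^{d} p_{J_j|_{V∖{v}}}. Then f̃ ∈ I_{G'}, and f is a minimal generator of I_G if and only if f̃ is a minimal generator of I_{G'}. -/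
open MvPolynomial Finset

namespace BinaryGraphModels

/-- The induced subgraph of `G` obtained by deleting the vertex `w`. -/
def deleteVertex {V : Type} (G : SimpleGraph V) (w : V) : SimpleGraph {x : V // x ≠ w} :=
  SimpleGraph.comap Subtype.val G

/-!
A polynomial lies in `I_G` iff it vanishes on all tables parametrized by the model. Positing a
potential at *every* vertex, not only at the isolated ones, gives no new tables, since a vertex
potential can be moved into the edge to any neighbour. In this larger parametrization both
comparisons with `G' = G ∖ v` are immediate: fixing the value `c` at `v` turns each edge `{k, v}`
into a potential at `k`, and conversely every table of `G'`, extended by zero to the strings with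
value `≠ c` at `v`, is a table of `G`. So inserting the value `c` maps `I_{G'}` into `I_G` (if
`v` is not the only vertex), killing the variables with value `≠ c` and restricting maps `I_G` into
`I_{G'}`, and both maps respect the irrelevant ideals.
-/

section General

theorem eval_aeval {R σ τ : Type*} [CommSemiring R] (t : τ → R) (h : σ → MvPolynomial τ R)
    (f : MvPolynomial σ R) : eval t (aeval h f) = eval (fun i => eval t (h i)) f :=
  eval₂Hom_bind₁ (RingHom.id R) t h f

theorem map_mem_idealOfVars_mul {R σ τ : Type*} [CommSemiring R]
    {φ : MvPolynomial σ R →ₐ[R] MvPolynomial τ R} {I : Ideal (MvPolynomial σ R)}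
    {J : Ideal (MvPolynomial τ R)} (hX : ∀ i, φ (X i) ∈ idealOfVars τ R)
    (hIJ : ∀ f ∈ I, φ f ∈ J) {f : MvPolynomial σ R} (hf : f ∈ idealOfVars σ R * I) :
    φ f ∈ idealOfVars τ R * J := by
  have map_vars_le : (idealOfVars σ R).map φ ≤ idealOfVars τ R := by
    rw [idealOfVars, Ideal.map_span, Ideal.span_le]
    rintro _ ⟨_, ⟨i, rfl⟩, rfl⟩
    exact hX i
  have mem_map := Ideal.mem_map_of_mem φ hf
  rw [Ideal.map_mul] at mem_map
  exact Ideal.mul_mono map_vars_le (Ideal.map_le_iff_le_comap.2 hIJ) mem_map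

theorem prod_edgeFinset_lift_mul_swap {V M : Type*} [Fintype V] [CommMonoid M]
    (G : SimpleGraph V) [DecidableRel G.Adj] [Fintype G.edgeSet] (F : V → V → M) :
    ∏ e ∈ G.edgeFinset, Sym2.lift ⟨fun j k => F j k * F k j, fun _ _ => mul_comm _ _⟩ e =
      ∏ j, ∏ k, if G.Adj j k then F j k else 1 := by
  classical
  rw [← Fintype.prod_prod_type' fun j k => if G.Adj j k then F j k else 1, ← Finset.prod_filter,
    ← Finset.prod_fiberwise_of_maps_to (t := G.edgeFinset) (g := fun p : V × V => s(p.1, p.2))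
      (by simp)]
  refine Finset.prod_congr rfl fun e he => ?_
  induction e with | _ j k =>
  have hjk : G.Adj j k := by simpa using he
  have fiber_eq_pair :
      ({p : V × V | G.Adj p.1 p.2} : Finset _).filter (fun p => s(p.1, p.2) = s(j, k)) =
        {(j, k), (k, j)} := by
    ext ⟨a, b⟩
    simp only [mem_filter, mem_univ, true_and, Sym2.eq_iff, mem_insert, mem_singleton,
      Prod.mk.injEq]
    exact and_iff_right_of_imp (by rintro (⟨rfl, rfl⟩ | ⟨rfl, rfl⟩); exacts [hjk, hjk.symm])
  rw [fiber_eq_pair, Finset.prod_pair (by simp [hjk.ne])]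
  rfl

end General

section Parametrization

variable {V : Type} [Fintype V]

open Classical in
/-- The table of the binary graph model of `G` with edge potentials `w` and vertex potentials `u`.
An edge `{j, k}` contributes the two factors `w j k` and `w k j`, so that `w` needs no symmetry, and
every vertex, isolated or not, carries a potential. -/
noncomputable def modelTable (G : SimpleGraph V) (w : V → V → Bool → Bool → ℂ)
    (u : V → Bool → ℂ) (I : V → Bool) : ℂ :=
  (∏ j, ∏ k, if G.Adj j k then w j k (I j) (I k) else 1) * ∏ l, u l (I l)

open Classical in
theorem exists_modelTable_eq_isolated (G : SimpleGraph V) (w : V → V → Bool → Bool → ℂ)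
    (u : V → Bool → ℂ) :
    ∃ w', modelTable G w u =
      modelTable G w' fun l a => if ∀ k, ¬ G.Adj l k then u l a else 1 := by
  have exists_neighbor (l : V) : ∃ n, (∃ k, G.Adj l k) → G.Adj l n := by
    by_cases h : ∃ k, G.Adj l k
    · exact h.imp fun _ hk _ => hk
    · exact ⟨l, fun h' => absurd h' h⟩
  choose n hn using exists_neighbor
  refine ⟨fun j k a b => w j k a b * if k = n j then u j a else 1, funext fun I => ?_⟩
  have prod_absorbed (j : V) :
      (∏ k, if G.Adj j k then (if k = n j then u j (I j) else 1) else 1) =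
        if ∀ k, ¬ G.Adj j k then 1 else u j (I j) := by
    simp only [← ite_and, and_comm (a := G.Adj _ _)]
    simp only [ite_and, Finset.prod_ite_eq', Finset.mem_univ, if_true]
    by_cases h : ∃ k, G.Adj j k
    · simp [hn j h, h]
    · push Not at h
      simp [h]
  have prod_vertices : ∏ l, u l (I l) =
      (∏ l, if ∀ k, ¬ G.Adj l k then 1 else u l (I l)) *
        ∏ l, if ∀ k, ¬ G.Adj l k then u l (I l) else 1 := by
    rw [← Finset.prod_mul_distrib]
    refine Finset.prod_congr rfl fun l _ => ?_
    split_ifs <;> simp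
  simp only [modelTable, ite_mul_one, Finset.prod_mul_distrib, prod_absorbed, mul_assoc]
  rw [prod_vertices]

open Classical in
theorem eval_phi (G : SimpleGraph V) {T : Sym2 (V × Bool) → ℂ} {w : V → V → Bool → Bool → ℂ}
    (hT : ∀ j k a b, T s((j, a), (k, b)) = w j k a b * w k j b a) (u : V × Bool → ℂ)
    (f : MvPolynomial (V → Bool) ℂ) :
    eval (Sum.elim T u) (phi G f) =
      eval (modelTable G w fun l a => if ∀ k, ¬ G.Adj l k then u (l, a) else 1) f := by
  have edge_factor (I : V → Bool) (e : Sym2 V) : T (e.map fun x => (x, I x)) =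
      Sym2.lift ⟨fun j k => w j k (I j) (I k) * w k j (I k) (I j), fun _ _ => mul_comm _ _⟩ e := by
    induction e with | _ j k => exact hT ..
  rw [phi, eval_aeval]
  congr 2 with I
  simp only [map_mul, map_prod, eval_X, Sum.elim_inl, Sum.elim_inr, edge_factor, modelTable,
    Finset.prod_filter, apply_ite (eval _), map_one]
  rw [prod_edgeFinset_lift_mul_swap G fun j k => w j k (I j) (I k)]

theorem mem_toricIdeal_iff_eval_modelTable {G : SimpleGraph V} {f : MvPolynomial (V → Bool) ℂ} :
    f ∈ toricIdeal G ↔ ∀ w u, eval (modelTable G w u) f = 0 := by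
  change phi G f = 0 ↔ _
  constructor
  · intro hf w u
    obtain ⟨w', hw'⟩ := exists_modelTable_eq_isolated G w u
    let T : Sym2 (V × Bool) → ℂ := Sym2.lift
      ⟨fun p q => w' p.1 q.1 p.2 q.2 * w' q.1 p.1 q.2 p.2, fun _ _ => mul_comm _ _⟩
    rw [hw', ← eval_phi (T := T) G (fun _ _ _ _ => rfl) fun p => u p.1 p.2, hf, map_zero]
  · intro hf
    refine MvPolynomial.funext fun t => ?_
    -- Each edge parameter is split evenly between the two orientations of the edge.
    choose r hr using fun e => IsAlgClosed.exists_eq_mul_self (t (Sum.inl e))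
    have edge_param_eq_mul (j k : V) (a b : Bool) : (t ∘ Sum.inl) s((j, a), (k, b)) =
        r s((j, a), (k, b)) * r s((k, b), (j, a)) := by
      rw [Sym2.eq_swap (a := (k, b))]
      exact hr _
    rw [← Sum.elim_comp_inl_inr t,
      eval_phi (w := fun j k a b => r s((j, a), (k, b))) G edge_param_eq_mul, hf, map_zero]

theorem toricIdeal_eq_bot_of_unique [Unique V] (G : SimpleGraph V) : toricIdeal G = ⊥ := by
  refine (Submodule.eq_bot_iff _).2 fun f hf => MvPolynomial.funext fun t => ?_
  have table_eq : modelTable G 1 (fun _ a => t fun _ => a) = t := by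
    funext I
    rw [eq_const_of_unique I]
    simp [modelTable, Function.const_def]
  rw [map_zero, ← table_eq]
  exact mem_toricIdeal_iff_eval_modelTable.1 hf _ _

end Parametrization

section ExtendString

variable {V : Type} [DecidableEq V] {v : V} {c : Bool}

/-- The index string on `V` that takes the value `c` at `v` and agrees with `I` elsewhere; it
inverts the deletion of the coordinate `v` on the strings with value `c` there. -/
def extendString (v : V) (c : Bool) (I : {x : V // x ≠ v} → Bool) : V → Bool :=
  (Equiv.funSplitAt v Bool).symm (c, I)

theorem extendString_self (I : {x : V // x ≠ v} → Bool) : extendString v c I v = c := by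
  simp [extendString]

theorem extendString_coe (I : {x : V // x ≠ v} → Bool) (x : {x : V // x ≠ v}) :
    extendString v c I x = I x := by
  simp [extendString, x.2]

theorem extendString_restrict {I : V → Bool} (hI : I v = c) :
    extendString v c (fun x => I x) = I := by
  subst hI
  exact (Equiv.funSplitAt v Bool).symm_apply_apply I

theorem restrict_comp_extendString :
    (fun I (x : {x : V // x ≠ v}) => I x) ∘ extendString v c = id :=
  funext fun I => funext (extendString_coe I)

theorem extendString_injective : Function.Injective (extendString v c) :=
  (Equiv.funSplitAt v Bool).symm.injective.comp (Prod.mk_right_injective c)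

end ExtendString

section ModelTable

variable {V : Type} [Fintype V] [DecidableEq V]

open Classical in
theorem modelTable_eq_modelTable_deleteVertex_mul (G : SimpleGraph V) (v : V)
    (w : V → V → Bool → Bool → ℂ) (u : V → Bool → ℂ) (I : V → Bool) :
    modelTable G w u I =
      modelTable (deleteVertex G v) (fun j k => w j k) (fun l => u l) (fun x => I x) *
        (u v (I v) * ∏ k : {x : V // x ≠ v},
          if G.Adj v k then w v k (I v) (I k) * w k v (I k) (I v) else 1) := by
  simp only [modelTable, ite_mul_one, Fintype.prod_eq_mul_prod_subtype_ne _ v,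
    Finset.prod_mul_distrib, SimpleGraph.irrefl, if_false, one_mul, deleteVertex,
    SimpleGraph.comap_adj, G.adj_comm _ v]
  ring

theorem exists_modelTable_deleteVertex_eq_comp [Nontrivial V] (G : SimpleGraph V) (v : V)
    (c : Bool) (w : V → V → Bool → Bool → ℂ) (u : V → Bool → ℂ) :
    ∃ w' u', modelTable (deleteVertex G v) w' u' = modelTable G w u ∘ extendString v c := by
  classical
  -- The constant factor `u v c` has to be charged to some remaining vertex `m`.
  obtain ⟨m, hm⟩ := exists_ne v
  refine ⟨fun j k => w j k, fun k a => u k a *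
    ((if k = ⟨m, hm⟩ then u v c else 1) *
      if G.Adj v k then w v k c a * w k v a c else 1), funext fun I => ?_⟩
  rw [Function.comp_apply, modelTable_eq_modelTable_deleteVertex_mul G v]
  simp only [modelTable, extendString_self, extendString_coe, Finset.prod_mul_distrib,
    Finset.prod_ite_eq', Finset.mem_univ, if_true, mul_assoc]

theorem exists_modelTable_eq_ite (G : SimpleGraph V) (v : V) (c : Bool)
    (w : {x : V // x ≠ v} → {x : V // x ≠ v} → Bool → Bool → ℂ)
    (u : {x : V // x ≠ v} → Bool → ℂ) :
    ∃ w' u', modelTable G w' u' =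
      fun I => if I v = c then modelTable (deleteVertex G v) w u (fun x => I x) else 0 := by
  refine ⟨fun j k => if h : j ≠ v ∧ k ≠ v then w ⟨j, h.1⟩ ⟨k, h.2⟩ else 1,
    fun l a => if h : l ≠ v then u ⟨l, h⟩ a else if a = c then 1 else 0, funext fun I => ?_⟩
  have coe_ne (x : {x : V // x ≠ v}) : (x : V) ≠ v := x.2
  simp [modelTable_eq_modelTable_deleteVertex_mul G v, coe_ne]

end ModelTable

section SliceHom

variable {V : Type} {v : V} {c : Bool}

/-- The projection of `R_G` onto `R_{G'}`, `G' = G ∖ v`, that kills the variables of the strings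
whose value at `v` is not `c` and deletes the coordinate `v` from the others. -/
noncomputable def sliceHom (v : V) (c : Bool) :
    MvPolynomial (V → Bool) ℂ →ₐ[ℂ] MvPolynomial ({x : V // x ≠ v} → Bool) ℂ :=
  aeval fun I => if I v = c then X fun x => I x else 0

theorem sliceHom_X_mem_idealOfVars (I : V → Bool) :
    sliceHom v c (X I) ∈ idealOfVars ({x : V // x ≠ v} → Bool) ℂ := by
  rw [sliceHom, aeval_X]
  split_ifs
  exacts [Ideal.subset_span ⟨_, rfl⟩, zero_mem _]

theorem sliceHom_rename_extendString [DecidableEq V]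
    (g : MvPolynomial ({x : V // x ≠ v} → Bool) ℂ) :
    sliceHom v c (rename (extendString v c) g) = g := by
  have sliceHom_X_extendString (I : {x : V // x ≠ v} → Bool) :
      sliceHom v c (X (extendString v c I)) = X I := by
    simp only [sliceHom, aeval_X, extendString_self, extendString_coe, if_true]
  refine DFunLike.congr_fun (algHom_ext (f := (sliceHom v c).comp (rename _)) (g := .id ℂ _) ?_) g
  simpa using sliceHom_X_extendString

theorem eval_sliceHom (t : ({x : V // x ≠ v} → Bool) → ℂ) (f : MvPolynomial (V → Bool) ℂ) :
    eval t (sliceHom v c f) = eval (fun I => if I v = c then t fun x => I x else 0) f := by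
  simp only [sliceHom, eval_aeval, apply_ite (eval t), eval_X, map_zero]

end SliceHom

section DeleteVertex

variable {V : Type} [Fintype V] [DecidableEq V] {G : SimpleGraph V} {v : V} {c : Bool}

theorem sliceHom_mem_toricIdeal {f : MvPolynomial (V → Bool) ℂ} (hf : f ∈ toricIdeal G) :
    sliceHom v c f ∈ toricIdeal (deleteVertex G v) := by
  rw [mem_toricIdeal_iff_eval_modelTable] at hf ⊢
  intro w u
  obtain ⟨w', u', table_eq⟩ := exists_modelTable_eq_ite G v c w u
  rw [eval_sliceHom, ← table_eq, hf]

theorem rename_extendString_mem_toricIdeal [Nontrivial V]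
    {g : MvPolynomial ({x : V // x ≠ v} → Bool) ℂ} (hg : g ∈ toricIdeal (deleteVertex G v)) :
    rename (extendString v c) g ∈ toricIdeal G := by
  rw [mem_toricIdeal_iff_eval_modelTable] at hg ⊢
  intro w u
  obtain ⟨w', u', table_eq⟩ := exists_modelTable_deleteVertex_eq_comp G v c w u
  rw [eval_rename, ← table_eq, hg]

theorem rename_extendString_mem_idealOfVars_mul_iff
    {g : MvPolynomial ({x : V // x ≠ v} → Bool) ℂ}
    (hg : rename (extendString v c) g ∈ toricIdeal G) :
    rename (extendString v c) g ∈ idealOfVars (V → Bool) ℂ * toricIdeal G ↔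
      g ∈ idealOfVars ({x : V // x ≠ v} → Bool) ℂ * toricIdeal (deleteVertex G v) := by
  constructor
  · intro h
    rw [← sliceHom_rename_extendString (c := c) g]
    exact map_mem_idealOfVars_mul sliceHom_X_mem_idealOfVars (fun _ => sliceHom_mem_toricIdeal) h
  · intro h
    -- If `v` is the only vertex, then `I_{G'}` contains `X default - 1`, whose image is not in
    -- `I_G`.
    rcases subsingleton_or_nontrivial V with _ | _
    · have : Unique V := uniqueOfSubsingleton v
      rw [toricIdeal_eq_bot_of_unique, Ideal.mem_bot] at hg
      simp [hg]
    · refine map_mem_idealOfVars_mul (fun I => ?_) (fun _ => rename_extendString_mem_toricIdeal) h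
      rw [rename_X]
      exact Ideal.subset_span ⟨_, rfl⟩

theorem minimalGenerator_deleteVertex_general {f : MvPolynomial (V → Bool) ℂ}
    (hfc : f ∈ supported ℂ {I : V → Bool | I v = c}) (hfI : f ∈ toricIdeal G) :
    rename (fun I (x : {x : V // x ≠ v}) => I x) f ∈ toricIdeal (deleteVertex G v) ∧
      (IsMinimalGenerator G f ↔ IsMinimalGenerator (deleteVertex G v)
        (rename (fun I (x : {x : V // x ≠ v}) => I x) f)) := by
  obtain ⟨g, rfl⟩ := exists_rename_eq_of_vars_subset_range f (extendString v c)
    extendString_injective fun I hI => ⟨_, extendString_restrict (mem_supported.1 hfc hI)⟩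
  have hgI : g ∈ toricIdeal (deleteVertex G v) :=
    sliceHom_rename_extendString (c := c) g ▸ sliceHom_mem_toricIdeal hfI
  rw [rename_rename, restrict_comp_extendString, rename_id_apply]
  exact ⟨hgI, and_congr (iff_of_true hfI hgI)
    (rename_extendString_mem_idealOfVars_mul_iff hfI).not⟩

end DeleteVertex

/-- Lemma on vertex deletion: if `f = ∏ p_{I_j} - ∏ p_{J_j}` is a nonzero
binomial in `I_G` all of whose index strings take the common value `c` at a vertex `v`, then
the image binomial `f̃` obtained by deleting the coordinate `v` lies in `I_{G∖v}`, and `f` is a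
minimal generator of `I_G` iff `f̃` is a minimal generator of `I_{G∖v}`. -/
theorem minimalGenerator_deleteVertex {V : Type} [Fintype V] [DecidableEq V]
    (G : SimpleGraph V) (v : V) (d : ℕ)
    (Istr Jstr : Fin d → (V → Bool)) (c : Bool)
    (hI : ∀ j, Istr j v = c) (hJ : ∀ j, Jstr j v = c)
    (f : MvPolynomial (V → Bool) ℂ)
    (hfdef : f = (∏ j : Fin d, X (Istr j)) - ∏ j : Fin d, X (Jstr j))
    (hf0 : f ≠ 0)
    (hfI : f ∈ toricIdeal G) :
    ((∏ j : Fin d, X (fun x : {x : V // x ≠ v} => Istr j x.val)) -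
        (∏ j : Fin d, X (fun x : {x : V // x ≠ v} => Jstr j x.val)) ∈
      toricIdeal (deleteVertex G v)) ∧
    (IsMinimalGenerator G f ↔
      IsMinimalGenerator (deleteVertex G v)
        ((∏ j : Fin d, X (fun x : {x : V // x ≠ v} => Istr j x.val)) -
          ∏ j : Fin d, X (fun x : {x : V // x ≠ v} => Jstr j x.val))) := by
  have hfc : f ∈ supported ℂ {I : V → Bool | I v = c} := hfdef ▸ sub_mem
    (prod_mem fun j _ => X_mem_supported.2 (hI j)) (prod_mem fun j _ => X_mem_supported.2 (hJ j))
  simpa [hfdef] using minimalGenerator_deleteVertex_general hfc hfI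

end BinaryGraphModels
end

section
/- Let H be a finite simple graph on vertex set V and let C_A and C_B be proper 3-colorings of H. Define index strings a_j, b_j : V → {0,1} for j ∈ {1,2,3} by a_j(v) = 1 iff C_A(v) = j and b_j(v) = 1 iff C_B(v) = j, and set f = p_{a₁} p_{a₂} p_{a₃} − p_{b₁} p_{b₂} p_{b₃}. Then f ∈ I_H, and f lies in the ideal of R_H generated by the elements of I_H of total degree 2 if and only if C_A and C_B lie in the same connected component of the 3-coloring graph C₃(H). -/
open MvPolynomial Finset

namespace BinaryGraphModels

/-- `C` is a proper 3-coloring of `H` (colors in `Fin 3`). -/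
def ProperColoring {V : Type} (H : SimpleGraph V) (C : V → Fin 3) : Prop :=
  ∀ u v : V, H.Adj u v → C u ≠ C v

/-- `C'` is obtained from `C` by picking a color `i`, picking a connected component `K` of the
induced subgraph of `H` on the vertices not colored `i`, and interchanging the two colors
different from `i` on all vertices of `K` while leaving all other vertices unchanged. -/
def ColoringMove {V : Type} (H : SimpleGraph V) (C C' : V → Fin 3) : Prop :=
  ∃ i : Fin 3, ∃ K : (H.induce {v : V | C v ≠ i}).ConnectedComponent,
    (∀ v : {v : V | C v ≠ i},
      ((H.induce {v : V | C v ≠ i}).connectedComponentMk v = K →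
        C' v.val ≠ C v.val ∧ C' v.val ≠ i) ∧
      ((H.induce {v : V | C v ≠ i}).connectedComponentMk v ≠ K → C' v.val = C v.val)) ∧
    ∀ v : V, C v = i → C' v = C v

/-- One step (edge) in the 3-coloring graph `C₃(H)`: both endpoints are proper 3-colorings and
one is obtained from the other by a color-interchange move. -/
def ColoringStep {V : Type} (H : SimpleGraph V) (C C' : V → Fin 3) : Prop :=
  ProperColoring H C ∧ ProperColoring H C' ∧ (ColoringMove H C C' ∨ ColoringMove H C' C)

/-!
The map `φ_H` sends monomials to monomials, so the span of the low-degree elements of its kernel is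
controlled by connectivity: if a set of monomials is closed under replacing a factor of degree at
most two by another one with the same image, then the sum of the coefficients over this set
vanishes on that span. The fiber of the monomial of a proper 3-coloring consists exactly of the
monomials of proper 3-colorings, so a quadratic move keeps one color class and rearranges the other
two. Two proper 3-colorings sharing a color class differ by interchanges on Kempe components.
Conversely, every interchange keeps a color class, and dividing the binomial of the two colorings by
the variable of that class leaves a quadric of the toric ideal.
-/

section MonomialMaps

variable {σ τ R : Type*}

theorem aeval_monomial_one_monomial [CommSemiring R] (e : σ → τ →₀ ℕ) (d : σ →₀ ℕ) (c : R) :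
    aeval (fun i => monomial (e i) (1 : R)) (monomial d c) =
      monomial (Finsupp.linearCombination ℕ e d) c := by
  simp only [aeval_monomial, Finsupp.prod, monomial_pow, one_pow, algebraMap_eq,
    Finsupp.linearCombination_apply, Finsupp.sum, monomial_sum_index]

/-- The linear functional adding up the coefficients of the monomials with exponents in `S`. -/
noncomputable def coeffSum [CommSemiring R] (S : Set (σ →₀ ℕ)) : MvPolynomial σ R →ₗ[R] R :=
  (basisMonomials σ R).constr R (S.indicator 1)

theorem coeffSum_monomial [CommSemiring R] (S : Set (σ →₀ ℕ)) (d : σ →₀ ℕ) (c : R) :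
    coeffSum S (monomial d c) = S.indicator (fun _ => c) d := by
  have hbasis : monomial d c = c • basisMonomials σ R d := by simp [smul_monomial]
  rw [hbasis, map_smul, coeffSum, Module.Basis.constr_basis]
  by_cases hd : d ∈ S <;> simp [hd]

/-- A set of exponents is closed under moves of degree at most `n` for the monomial map
`X i ↦ monomial (e i) 1` if it is preserved by replacing a factor of degree at most `n` by one with
the same image. -/
def ClosedUnderMoves (e : σ → τ →₀ ℕ) (n : ℕ) (S : Set (σ →₀ ℕ)) : Prop :=
  ∀ m d d' : σ →₀ ℕ, d.degree ≤ n → d'.degree ≤ n →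
    Finsupp.linearCombination ℕ e d = Finsupp.linearCombination ℕ e d' → m + d ∈ S → m + d' ∈ S

variable {e : σ → τ →₀ ℕ} {n : ℕ} {S : Set (σ →₀ ℕ)}

theorem ClosedUnderMoves.coeffSum_monomial_mul [CommSemiring R] (hS : ClosedUnderMoves e n S)
    (m : σ →₀ ℕ) (c : R) {g : MvPolynomial σ R}
    (hg : aeval (fun i => monomial (e i) (1 : R)) g = 0) (hdeg : g.totalDegree ≤ n) :
    coeffSum S (monomial m c * g) = 0 := by
  -- Closure makes the condition `m + d ∈ S` depend only on the image of `d`.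
  let T : Set (τ →₀ ℕ) :=
    {t | ∃ d : σ →₀ ℕ, d.degree ≤ n ∧ m + d ∈ S ∧ Finsupp.linearCombination ℕ e d = t}
  have mem_iff (d : σ →₀ ℕ) (hd : d ∈ g.support) :
      m + d ∈ S ↔ Finsupp.linearCombination ℕ e d ∈ T := by
    have hdn : d.degree ≤ n := (le_totalDegree hd).trans hdeg
    exact ⟨fun h => ⟨d, hdn, h, rfl⟩, fun ⟨d', hd', h, heq⟩ => hS m d' d hd' hdn heq h⟩
  calc coeffSum S (monomial m c * g)
      = ∑ d ∈ g.support, coeffSum S (monomial (m + d) (c * coeff d g)) := by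
        conv_lhs => rw [g.as_sum]
        simp only [mul_sum, map_sum, monomial_mul]
    _ = ∑ d ∈ g.support,
          c * coeffSum T (monomial (Finsupp.linearCombination ℕ e d) (coeff d g)) := by
        refine sum_congr rfl fun d hd => ?_
        by_cases h : m + d ∈ S
        · simp [coeffSum_monomial, h, (mem_iff d hd).1 h]
        · simp [coeffSum_monomial, h, mt (mem_iff d hd).2 h]
    _ = c * coeffSum T (aeval (fun i => monomial (e i) (1 : R)) g) := by
        conv_rhs => rw [g.as_sum]
        simp only [map_sum, mul_sum, aeval_monomial_one_monomial]
    _ = 0 := by rw [hg, map_zero, mul_zero]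

theorem ClosedUnderMoves.coeffSum_mul [CommSemiring R] (hS : ClosedUnderMoves e n S)
    (p : MvPolynomial σ R) {g : MvPolynomial σ R}
    (hg : aeval (fun i => monomial (e i) (1 : R)) g = 0) (hdeg : g.totalDegree ≤ n) :
    coeffSum S (p * g) = 0 := by
  induction p using MvPolynomial.induction_on' with
  | monomial m c => exact hS.coeffSum_monomial_mul m c hg hdeg
  | add p q hp hq => rw [add_mul, map_add, hp, hq, add_zero]

theorem ClosedUnderMoves.coeffSum_eq_zero_of_mem_span [CommSemiring R]
    (hS : ClosedUnderMoves e n S) {f : MvPolynomial σ R}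
    (hf : f ∈ Ideal.span {g : MvPolynomial σ R |
      aeval (fun i => monomial (e i) (1 : R)) g = 0 ∧ g.totalDegree ≤ n}) :
    coeffSum S f = 0 := by
  suffices h : ∀ p, coeffSum S (p * f) = 0 by simpa using h 1
  induction hf using Submodule.span_induction with
  | mem g hg => exact fun p => hS.coeffSum_mul p hg.1 hg.2
  | zero => simp
  | add f g _ _ hf hg => exact fun p => by rw [mul_add, map_add, hf, hg, add_zero]
  | smul q f _ hf => exact fun p => by rw [smul_eq_mul, ← mul_assoc, hf]

theorem ClosedUnderMoves.mem_of_monomial_sub_monomial_mem_span [CommRing R] [Nontrivial R]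
    (hS : ClosedUnderMoves e n S) {a b : σ →₀ ℕ}
    (h : monomial a 1 - monomial b 1 ∈ Ideal.span {g : MvPolynomial σ R |
      aeval (fun i => monomial (e i) (1 : R)) g = 0 ∧ g.totalDegree ≤ n})
    (ha : a ∈ S) : b ∈ S := by
  by_contra hb
  simpa [coeffSum_monomial, ha, hb] using hS.coeffSum_eq_zero_of_mem_span h

end MonomialMaps

section FiniteFamilies

variable {κ α M : Type*} [Fintype κ]

theorem mem_support_sum_single_one (I : κ → α) (a : α) :
    a ∈ (∑ j, Finsupp.single (I j) 1 : α →₀ ℕ).support ↔ ∃ j, I j = a := by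
  classical
  simp [Finsupp.finsetSum_apply, Finsupp.single_apply]

theorem mapDomain_sum_single_one_apply {β : Type*} [DecidableEq β] (g : α → β) (I : κ → α) (b : β) :
    (∑ j, Finsupp.single (I j) 1 : α →₀ ℕ).mapDomain g b = #{j | g (I j) = b} := by
  simp [Finsupp.mapDomain_finsetSum, Finsupp.finsetSum_apply, Finsupp.single_apply]

theorem exists_sum_single_one_eq {d : α →₀ ℕ} (hd : d.degree = Fintype.card κ) :
    ∃ I : κ → α, ∑ j, Finsupp.single (I j) 1 = d := by
  classical
  let l := d.toMultiset.toList
  have hl : Fintype.card κ = l.length := by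
    rw [Multiset.length_toList, Finsupp.card_toMultiset, ← hd]
    rfl
  let enum : κ ≃ Fin l.length := Fintype.equivFinOfCardEq hl
  refine ⟨fun j => l.get (enum j), Finsupp.orderIsoMultiset.injective ?_⟩
  rw [enum.sum_comp fun k => Finsupp.single (l.get k) 1]
  simp [l]

theorem exists_perm_apply_eq_and_apply_eq {x y x' y' : α} (h : x = y ↔ x' = y') :
    ∃ π : Equiv.Perm α, π x = x' ∧ π y = y' := by
  classical
  by_cases hxy : x = y
  · exact ⟨Equiv.swap x x', Equiv.swap_apply_left x x',
      by rw [← hxy, ← h.1 hxy, Equiv.swap_apply_left]⟩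
  · obtain ⟨π, hπ⟩ := Equiv.Perm.exists_extending_pair ![x, y] ![x', y']
      (by simpa using hxy) (by simpa using mt h.2 hxy)
    exact ⟨π, hπ 0, hπ 1⟩

theorem sum_decide_decide_eq [DecidableEq κ] [AddCommMonoid M] (g : Bool → Bool → M)
    {x y x' y' : κ} (h : x = y ↔ x' = y') :
    ∑ j, g (decide (x = j)) (decide (y = j)) = ∑ j, g (decide (x' = j)) (decide (y' = j)) := by
  obtain ⟨π, rfl, rfl⟩ := exists_perm_apply_eq_and_apply_eq h
  rw [← Equiv.sum_comp π fun j => g (decide (π x = j)) (decide (π y = j))]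
  simp only [π.apply_eq_iff_eq]

end FiniteFamilies

section Marginals

variable {V : Type} [Fintype V]

/-- The exponent of the monomial `phi G (X I)`. -/
noncomputable def exponentVec (G : SimpleGraph V) (I : V → Bool) :
    Sym2 (V × Bool) ⊕ (V × Bool) →₀ ℕ := by
  letI : DecidableRel G.Adj := Classical.decRel _
  exact (∑ e ∈ G.edgeFinset, Finsupp.single (Sum.inl (Sym2.map (fun v => (v, I v)) e)) 1) +
    ∑ l ∈ univ.filter (fun l : V => ∀ k, ¬ G.Adj l k), Finsupp.single (Sum.inr (l, I l)) 1

/-- The linear map describing `phi G` on exponents. Viewing an exponent `d` as a table of counts,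
`marginals G d` lists its two-way marginals along the edges and its one-way marginals at the
isolated vertices. -/
noncomputable def marginals (G : SimpleGraph V) :
    ((V → Bool) →₀ ℕ) →ₗ[ℕ] (Sym2 (V × Bool) ⊕ (V × Bool) →₀ ℕ) :=
  Finsupp.linearCombination ℕ (exponentVec G)

variable {G : SimpleGraph V}

theorem phi_eq_aeval (G : SimpleGraph V) :
    phi G = aeval fun I => monomial (exponentVec G I) (1 : ℂ) := by
  refine algHom_ext fun I => ?_
  have monomial_add (a b : Sym2 (V × Bool) ⊕ (V × Bool) →₀ ℕ) :
      monomial (a + b) (1 : ℂ) = monomial a 1 * monomial b 1 := by rw [monomial_mul, one_mul]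
  simp only [phi, exponentVec, aeval_X, monomial_add, monomial_sum_one]
  rfl

theorem mem_toricIdeal_iff {f : MvPolynomial (V → Bool) ℂ} :
    f ∈ toricIdeal G ↔ aeval (fun I => monomial (exponentVec G I) (1 : ℂ)) f = 0 := by
  rw [← phi_eq_aeval]
  rfl

theorem monomial_sub_monomial_mem_toricIdeal {d d' : (V → Bool) →₀ ℕ}
    (h : marginals G d = marginals G d') :
    monomial d (1 : ℂ) - monomial d' 1 ∈ toricIdeal G := by
  rw [mem_toricIdeal_iff, map_sub, aeval_monomial_one_monomial, aeval_monomial_one_monomial,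
    sub_eq_zero]
  exact congrArg (monomial · 1) h

theorem mem_toricIdeal_of_X_mul_mem {I : V → Bool} {q : MvPolynomial (V → Bool) ℂ}
    (h : X I * q ∈ toricIdeal G) : q ∈ toricIdeal G := by
  rw [mem_toricIdeal_iff, map_mul, aeval_X] at h
  exact mem_toricIdeal_iff.2 ((mul_eq_zero.1 h).resolve_left (by simp))

theorem exponentVec_inl {u v : V} (huv : G.Adj u v) (I : V → Bool) (a b : Bool) :
    exponentVec G I (Sum.inl s((u, a), (v, b))) = if I u = a ∧ I v = b then 1 else 0 := by
  classical
  have edge_eq (e : Sym2 V) (he : e.map (fun w => (w, I w)) = s((u, a), (v, b))) :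
      e = s(u, v) := by
    simpa [Sym2.map_map] using congrArg (Sym2.map Prod.fst) he
  simp only [exponentVec, Finsupp.add_apply, Finsupp.finsetSum_apply, Finsupp.single_apply,
    Sum.inl.injEq, reduceCtorEq, if_false, sum_const_zero, add_zero]
  rw [sum_eq_single s(u, v)]
  · simp [huv.ne, huv.ne']
  · exact fun e _ hne => if_neg fun he => hne (edge_eq e he)
  · exact fun h => absurd (by simpa using huv) h

theorem exponentVec_inr {v : V} (hv : ∀ k, ¬ G.Adj v k) (I : V → Bool) (a : Bool) :
    exponentVec G I (Sum.inr (v, a)) = if I v = a then 1 else 0 := by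
  classical
  simp only [exponentVec, Finsupp.add_apply, Finsupp.finsetSum_apply, Finsupp.single_apply,
    Sum.inr.injEq, Prod.mk.injEq, reduceCtorEq, if_false, sum_const_zero, zero_add]
  rw [sum_eq_single v]
  · simp
  · exact fun l _ hl => if_neg fun h => hl h.1
  · exact fun h => absurd (by simpa using hv) h

theorem marginals_inl {u v : V} (huv : G.Adj u v) (d : (V → Bool) →₀ ℕ) (a b : Bool) :
    marginals G d (Sum.inl s((u, a), (v, b))) = d.mapDomain (fun I => (I u, I v)) (a, b) := by
  induction d using Finsupp.induction_linear with
  | zero => simp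
  | add d d' hd hd' => simp [Finsupp.mapDomain_add, hd, hd']
  | single I n => simp [marginals, exponentVec_inl huv, Finsupp.single_apply]

theorem marginals_inr {v : V} (hv : ∀ k, ¬ G.Adj v k) (d : (V → Bool) →₀ ℕ) (a : Bool) :
    marginals G d (Sum.inr (v, a)) = d.mapDomain (fun I => I v) a := by
  induction d using Finsupp.induction_linear with
  | zero => simp
  | add d d' hd hd' => simp [Finsupp.mapDomain_add, hd, hd']
  | single I n => simp [marginals, exponentVec_inr hv, Finsupp.single_apply]

theorem edgeMarginal_eq_of_marginals_eq {d d' : (V → Bool) →₀ ℕ}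
    (h : marginals G d = marginals G d') {u v : V} (huv : G.Adj u v) :
    d.mapDomain (fun I => (I u, I v)) = d'.mapDomain (fun I => (I u, I v)) := by
  ext ⟨a, b⟩
  rw [← marginals_inl huv, ← marginals_inl huv, h]

theorem vertexMarginal_eq_of_marginals_eq {d d' : (V → Bool) →₀ ℕ}
    (h : marginals G d = marginals G d') (v : V) :
    d.mapDomain (fun I => I v) = d'.mapDomain (fun I => I v) := by
  by_cases hv : ∀ k, ¬ G.Adj v k
  · ext a
    rw [← marginals_inr hv, ← marginals_inr hv, h]
  · push Not at hv
    obtain ⟨w, hvw⟩ := hv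
    have hedge := edgeMarginal_eq_of_marginals_eq h hvw
    simpa only [← Finsupp.mapDomain_comp, Function.comp_def] using
      congrArg (Finsupp.mapDomain Prod.fst) hedge

theorem degree_eq_of_marginals_eq [Nonempty V] {d d' : (V → Bool) →₀ ℕ}
    (h : marginals G d = marginals G d') : d.degree = d'.degree := by
  obtain ⟨v⟩ := ‹Nonempty V›
  simpa only [Finsupp.degree_mapDomain] using
    congrArg Finsupp.degree (vertexMarginal_eq_of_marginals_eq h v)

end Marginals

section ColoringTables

/-- The index string of a color class: `colorClass C j` takes the value `true` exactly on the
vertices of color `j`. -/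
def colorClass {V κ : Type*} [DecidableEq κ] (C : V → κ) (j : κ) : V → Bool :=
  fun v => decide (C v = j)

/-- The exponent of the cubic monomial `p_{c₁} p_{c₂} p_{c₃}` given by the color classes of `C`. -/
noncomputable def coloringTable {V : Type*} (C : V → Fin 3) : (V → Bool) →₀ ℕ :=
  ∑ j, Finsupp.single (colorClass C j) 1

theorem colorClass_eq_iff {V κ : Type*} [DecidableEq κ] {C C' : V → κ} {i j : κ} :
    colorClass C i = colorClass C' j ↔ ∀ v, C v = i ↔ C' v = j := by
  simp only [funext_iff, colorClass, decide_eq_decide]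

theorem exists_colorClass_eq {V κ : Type*} [DecidableEq κ] {I : κ → V → Bool}
    (hI : ∀ v, ∃! j, I j v = true) : ∃ C : V → κ, colorClass C = I := by
  choose C hC hunique using hI
  refine ⟨C, ?_⟩
  ext j v
  rw [colorClass, Bool.eq_iff_iff, decide_eq_true_iff]
  exact ⟨fun h => h ▸ hC v, fun h => (hunique v j h).symm⟩

theorem prod_X_colorClass {V : Type*} (C : V → Fin 3) :
    (∏ j, X (colorClass C j) : MvPolynomial (V → Bool) ℂ) = monomial (coloringTable C) 1 := by
  rw [coloringTable, monomial_sum_one]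
  rfl

theorem degree_coloringTable {V : Type*} (C : V → Fin 3) : (coloringTable C).degree = 3 := by
  simp [coloringTable]

theorem edgeMarginal_coloringTable_true_true_eq_zero_iff {V : Type*} (C : V → Fin 3) (u v : V) :
    (coloringTable C).mapDomain (fun I => (I u, I v)) (true, true) = 0 ↔ C u ≠ C v := by
  rw [coloringTable, mapDomain_sum_single_one_apply, card_eq_zero, filter_eq_empty_iff]
  simp [colorClass, eq_comm]

variable {V : Type} [Fintype V] {H : SimpleGraph V} {C C' : V → Fin 3}

theorem marginals_coloringTable_eq (hC : ProperColoring H C) (hC' : ProperColoring H C') :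
    marginals H (coloringTable C) = marginals H (coloringTable C') := by
  simp only [marginals, coloringTable, map_sum, Finsupp.linearCombination_single, one_smul,
    exponentVec, sum_add_distrib, sum_comm (s := univ (α := Fin 3))]
  congr 1
  · refine sum_congr rfl fun e he => ?_
    induction e with | _ u v => ?_
    have huv : H.Adj u v := by simpa using he
    exact sum_decide_decide_eq (fun a b => Finsupp.single (Sum.inl s((u, a), (v, b))) 1)
      (iff_of_false (hC u v huv) (hC' u v huv))
  · exact sum_congr rfl fun l _ => sum_decide_decide_eq
      (fun a _ => Finsupp.single (Sum.inr (l, a)) 1) (iff_of_true rfl rfl)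

theorem exists_properColoring_of_marginals_eq [Nonempty V] (hC : ProperColoring H C)
    {d : (V → Bool) →₀ ℕ} (h : marginals H (coloringTable C) = marginals H d) :
    ∃ C', ProperColoring H C' ∧ coloringTable C' = d := by
  have hdeg : d.degree = Fintype.card (Fin 3) := by
    rw [← degree_eq_of_marginals_eq h, degree_coloringTable, Fintype.card_fin]
  obtain ⟨I, rfl⟩ := exists_sum_single_one_eq hdeg
  have hunique (v : V) : ∃! j, I j v = true := by
    have hvertex := DFunLike.congr_fun (vertexMarginal_eq_of_marginals_eq h v) true
    rw [coloringTable, mapDomain_sum_single_one_apply, mapDomain_sum_single_one_apply] at hvertex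
    simpa [colorClass, filter_eq, card_eq_one, eq_singleton_iff_unique_mem, ExistsUnique]
      using hvertex.symm
  obtain ⟨C', rfl⟩ := exists_colorClass_eq hunique
  refine ⟨C', fun u v huv heq => ?_, rfl⟩
  have hedge := DFunLike.congr_fun (edgeMarginal_eq_of_marginals_eq h huv) (true, true)
  rw [(edgeMarginal_coloringTable_true_true_eq_zero_iff C u v).2 (hC u v huv)] at hedge
  exact (edgeMarginal_coloringTable_true_true_eq_zero_iff C' u v).1 hedge.symm heq

end ColoringTables

section KempeComponents

variable {V : Type} {H : SimpleGraph V} {C C' : V → Fin 3} {i j : Fin 3}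

open Classical in
theorem ProperColoring.piecewise {S : Set V} (hC : ProperColoring H C) (hC' : ProperColoring H C')
    (h : ∀ u ∈ S, ∀ v ∉ S, H.Adj u v → C' u ≠ C v) : ProperColoring H (S.piecewise C' C) := by
  intro u v huv
  by_cases hu : u ∈ S <;> by_cases hv : v ∈ S <;>
    simp only [Set.piecewise, hu, hv, if_true, if_false]
  · exact hC' u v huv
  · exact h u hu v hv huv
  · exact (h v hv u hu huv.symm).symm
  · exact hC u v huv

/-- The vertex set of a Kempe component: a connected component of the subgraph induced on the two
colors different from `i`. -/
def kempeVerts (K : (H.induce {v | C v ≠ i}).ConnectedComponent) : Set V :=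
  Subtype.val '' K.supp

theorem mem_kempeVerts_iff {K : (H.induce {v | C v ≠ i}).ConnectedComponent} {v : V} :
    v ∈ kempeVerts K ↔ ∃ hv : C v ≠ i, SimpleGraph.connectedComponentMk _ ⟨v, hv⟩ = K := by
  simp [kempeVerts]

theorem mem_kempeVerts_of_adj {K : (H.induce {v | C v ≠ i}).ConnectedComponent} {u v : V}
    (hu : u ∈ kempeVerts K) (huv : H.Adj u v) (hv : C v ≠ i) : v ∈ kempeVerts K := by
  obtain ⟨hui, rfl⟩ := mem_kempeVerts_iff.1 hu
  have hvu : (H.induce {v | C v ≠ i}).Adj ⟨v, hv⟩ ⟨u, hui⟩ := huv.symm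
  exact mem_kempeVerts_iff.2 ⟨hv, SimpleGraph.ConnectedComponent.sound hvu.reachable⟩

theorem ne_of_reachable_induce (hC : ProperColoring H C) (hC' : ProperColoring H C')
    (hi : ∀ v, C v = i ↔ C' v = i) {x y : {v | C v ≠ i}}
    (hxy : (H.induce {v | C v ≠ i}).Reachable x y) (hx : C' x ≠ C x) : C' y ≠ C y := by
  obtain ⟨walk⟩ := hxy
  induction walk with
  | nil => exact hx
  | @cons a b _ hab _ ih =>
    have hCab : C a ≠ C b := hC a b hab
    have hC'ab : C' a ≠ C' b := hC' a b hab
    have ha : C a ≠ i := a.2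
    have hb : C b ≠ i := b.2
    have ha' : C' a ≠ i := mt (hi a).2 ha
    have hb' : C' b ≠ i := mt (hi b).2 hb
    -- Both colorings use only the two colors other than `i` on the edge from `a` to `b`.
    exact ih (by omega)

open Classical in
theorem coloringStep_piecewise_kempeVerts (hC : ProperColoring H C) (hC' : ProperColoring H C')
    (hi : ∀ v, C v = i ↔ C' v = i) {K : (H.induce {v | C v ≠ i}).ConnectedComponent}
    (hK : ∀ v ∈ kempeVerts K, C' v ≠ C v) :
    ColoringStep H C ((kempeVerts K).piecewise C' C) := by
  have hK' (v : V) (hv : v ∈ kempeVerts K) : C' v ≠ i :=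
    mt (hi v).2 (mem_kempeVerts_iff.1 hv).1
  refine ⟨hC, hC.piecewise hC' fun u hu v hv huv => ?_, .inl ⟨i, K, fun v => ⟨?_, ?_⟩, ?_⟩⟩
  · have hvi : C v = i := not_not.1 fun h => hv (mem_kempeVerts_of_adj hu huv h)
    exact hvi ▸ hK' u hu
  · intro hvK
    have hv : v.1 ∈ kempeVerts K := mem_kempeVerts_iff.2 ⟨v.2, hvK⟩
    rw [Set.piecewise_eq_of_mem _ _ _ hv]
    exact ⟨hK v hv, hK' v hv⟩
  · exact fun hvK => Set.piecewise_eq_of_notMem _ _ _ fun h => hvK (mem_kempeVerts_iff.1 h).2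
  · exact fun v hv => Set.piecewise_eq_of_notMem _ _ _ fun h => (mem_kempeVerts_iff.1 h).1 hv

theorem reflTransGen_coloringStep_of_colorClass_eq_same [Finite V] (hC : ProperColoring H C)
    (hC' : ProperColoring H C') (h : colorClass C i = colorClass C' i) :
    Relation.ReflTransGen (ColoringStep H) C C' := by
  classical
  rw [colorClass_eq_iff] at h
  induction hD : {v | C v ≠ C' v} using WellFoundedLT.induction generalizing C with | ind D ih
  subst hD
  by_cases heq : C = C'
  · rw [heq]
  obtain ⟨x, hx⟩ := Function.ne_iff.1 heq
  have hxi : C x ≠ i := fun hxi => hx (hxi.trans ((h x).1 hxi).symm)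
  let K := (H.induce {v | C v ≠ i}).connectedComponentMk ⟨x, hxi⟩
  have hxK : x ∈ kempeVerts K := mem_kempeVerts_iff.2 ⟨hxi, rfl⟩
  have hK (v : V) (hv : v ∈ kempeVerts K) : C' v ≠ C v := by
    obtain ⟨_, hvK⟩ := mem_kempeVerts_iff.1 hv
    exact ne_of_reachable_induce hC hC' h (SimpleGraph.ConnectedComponent.exact hvK).symm hx.symm
  have hstep := coloringStep_piecewise_kempeVerts hC hC' h hK
  have hdiff : {v | (kempeVerts K).piecewise C' C v ≠ C' v} = {v | C v ≠ C' v} \ kempeVerts K := by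
    ext v
    by_cases hv : v ∈ kempeVerts K <;> simp [hv]
  refine .head hstep (ih _ ?_ hstep.2.1 (fun v => ?_) rfl)
  · rw [hdiff]
    exact (Set.ssubset_iff_of_subset Set.sdiff_subset).2 ⟨x, hx, fun h => h.2 hxK⟩
  · by_cases hv : v ∈ kempeVerts K <;> simp [hv, h v]

theorem ProperColoring.perm_comp (hC : ProperColoring H C) (π : Equiv.Perm (Fin 3)) :
    ProperColoring H (π ∘ C) :=
  fun u v huv => π.injective.ne (hC u v huv)

theorem reflTransGen_coloringStep_swap_comp [Finite V] (hC : ProperColoring H C) (i j : Fin 3) :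
    Relation.ReflTransGen (ColoringStep H) C (Equiv.swap i j ∘ C) := by
  obtain ⟨k, hki, hkj⟩ : ∃ k, k ≠ i ∧ k ≠ j := by decide +revert
  refine reflTransGen_coloringStep_of_colorClass_eq_same (i := k) hC (hC.perm_comp _)
    (colorClass_eq_iff.2 fun v => ?_)
  rw [Function.comp_apply, Equiv.swap_apply_eq_iff, Equiv.swap_apply_of_ne_of_ne hki hkj]

theorem reflTransGen_coloringStep_of_colorClass_eq [Finite V] (hC : ProperColoring H C)
    (hC' : ProperColoring H C') (h : colorClass C i = colorClass C' j) :
    Relation.ReflTransGen (ColoringStep H) C C' := by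
  refine (reflTransGen_coloringStep_swap_comp hC i j).trans
    (reflTransGen_coloringStep_of_colorClass_eq_same (i := j) (hC.perm_comp _) hC'
      (colorClass_eq_iff.2 fun v => ?_))
  rw [Function.comp_apply, Equiv.swap_apply_eq_iff, Equiv.swap_apply_right]
  exact colorClass_eq_iff.1 h v

theorem reflTransGen_coloringStep_of_mem_support [Finite V] (hC : ProperColoring H C)
    (hC' : ProperColoring H C') {I : V → Bool} (hI : I ∈ (coloringTable C).support)
    (hI' : I ∈ (coloringTable C').support) : Relation.ReflTransGen (ColoringStep H) C C' := by
  obtain ⟨i, hi⟩ := (mem_support_sum_single_one _ I).1 hI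
  obtain ⟨j, hj⟩ := (mem_support_sum_single_one _ I).1 hI'
  exact reflTransGen_coloringStep_of_colorClass_eq hC hC' (hi.trans hj.symm)

theorem ColoringMove.exists_colorClass_eq (h : ColoringMove H C C') :
    ∃ i, colorClass C i = colorClass C' i := by
  obtain ⟨i, K, hne, heq⟩ := h
  refine ⟨i, colorClass_eq_iff.2 fun v => ⟨fun hv => (heq v hv).trans hv, fun hv' => ?_⟩⟩
  by_contra hv
  by_cases hvK : (H.induce {v | C v ≠ i}).connectedComponentMk ⟨v, hv⟩ = K
  · exact ((hne ⟨v, hv⟩).1 hvK).2 hv'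
  · exact hv (((hne ⟨v, hv⟩).2 hvK).symm.trans hv')

theorem ColoringStep.exists_colorClass_eq (h : ColoringStep H C C') :
    ∃ i, colorClass C i = colorClass C' i := by
  obtain ⟨-, -, h | h⟩ := h
  · exact h.exists_colorClass_eq
  · obtain ⟨i, hi⟩ := h.exists_colorClass_eq
    exact ⟨i, hi.symm⟩

end KempeComponents

section CubicBinomials

variable {V : Type} [Fintype V] {H : SimpleGraph V} {C C' : V → Fin 3}

/-- The exponents of the cubic monomials of the colorings in the connected component of `C` in the
3-coloring graph of `H`. -/
def reachableTables (H : SimpleGraph V) (C : V → Fin 3) : Set ((V → Bool) →₀ ℕ) :=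
  {d | ∃ C', ProperColoring H C' ∧ Relation.ReflTransGen (ColoringStep H) C C' ∧
    coloringTable C' = d}

theorem closedUnderMoves_reachableTables [Nonempty V] (H : SimpleGraph V) (C : V → Fin 3) :
    ClosedUnderMoves (exponentVec H) 2 (reachableTables H C) := by
  rintro m d d' hd - heq ⟨C₁, hC₁, hreach, hmd⟩
  have hfiber : marginals H (coloringTable C₁) = marginals H (m + d') := by
    rw [hmd, map_add, map_add]
    exact congrArg (marginals H m + ·) heq
  obtain ⟨C₂, hC₂, hmd'⟩ := exists_properColoring_of_marginals_eq hC₁ hfiber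
  have hm : m ≠ 0 := by
    rintro rfl
    have hdeg := degree_coloringTable C₁
    rw [hmd, zero_add] at hdeg
    omega
  obtain ⟨I, hI⟩ := Finsupp.support_nonempty_iff.2 hm
  have hI₁ : I ∈ (coloringTable C₁).support := by simp_all
  have hI₂ : I ∈ (coloringTable C₂).support := by simp_all
  exact ⟨C₂, hC₂, hreach.trans (reflTransGen_coloringStep_of_mem_support hC₁ hC₂ hI₁ hI₂), hmd'⟩

theorem prod_X_colorClass_sub_mem_toricIdeal (hC : ProperColoring H C)
    (hC' : ProperColoring H C') :
    (∏ j, X (colorClass C j) : MvPolynomial (V → Bool) ℂ) - ∏ j, X (colorClass C' j) ∈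
      toricIdeal H := by
  rw [prod_X_colorClass, prod_X_colorClass]
  exact monomial_sub_monomial_mem_toricIdeal (marginals_coloringTable_eq hC hC')

theorem reflTransGen_coloringStep_of_prod_X_colorClass_sub_mem_span (hC : ProperColoring H C)
    (hC' : ProperColoring H C')
    (h : (∏ j, X (colorClass C j) : MvPolynomial (V → Bool) ℂ) - ∏ j, X (colorClass C' j) ∈
      Ideal.span {g | g ∈ toricIdeal H ∧ g.totalDegree = 2}) :
    Relation.ReflTransGen (ColoringStep H) C C' := by
  cases isEmpty_or_nonempty V
  · rw [Subsingleton.elim C C']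
  rw [prod_X_colorClass, prod_X_colorClass] at h
  have hquadrics : {g | g ∈ toricIdeal H ∧ g.totalDegree = 2} ⊆
      {g | aeval (fun I => monomial (exponentVec H I) (1 : ℂ)) g = 0 ∧ g.totalDegree ≤ 2} :=
    fun g hg => ⟨mem_toricIdeal_iff.1 hg.1, hg.2.le⟩
  have htable : coloringTable C' ∈ reachableTables H C :=
    (closedUnderMoves_reachableTables H C).mem_of_monomial_sub_monomial_mem_span
      (Ideal.span_mono hquadrics h) ⟨C, hC, .refl, rfl⟩
  obtain ⟨C₁, hC₁, hreach, heq⟩ := htable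
  have hI : colorClass C' 0 ∈ (coloringTable C').support :=
    (mem_support_sum_single_one _ _).2 ⟨0, rfl⟩
  exact hreach.trans (reflTransGen_coloringStep_of_mem_support hC₁ hC' (heq ▸ hI) hI)

theorem prod_X_colorClass_sub_mem_span_of_colorClass_eq (hC : ProperColoring H C)
    (hC' : ProperColoring H C') {i : Fin 3} (h : colorClass C i = colorClass C' i) :
    (∏ j, X (colorClass C j) : MvPolynomial (V → Bool) ℂ) - ∏ j, X (colorClass C' j) ∈
      Ideal.span {g | g ∈ toricIdeal H ∧ g.totalDegree = 2} := by
  let pairProd (C : V → Fin 3) : MvPolynomial (V → Bool) ℂ := ∏ j ∈ univ.erase i, X (colorClass C j)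
  have pairProd_homogeneous (C : V → Fin 3) : (pairProd C).IsHomogeneous 2 := by
    simpa using IsHomogeneous.prod (univ.erase i) (fun j => X (colorClass C j)) (fun _ => 1)
      fun j _ => isHomogeneous_X ℂ (colorClass C j)
  have prod_eq (C : V → Fin 3) : ∏ j, X (colorClass C j) = X (colorClass C i) * pairProd C :=
    (mul_prod_erase univ _ (mem_univ i)).symm
  have hfactor : (∏ j, X (colorClass C j)) - ∏ j, X (colorClass C' j) =
      X (colorClass C i) * (pairProd C - pairProd C') := by
    rw [prod_eq, prod_eq, ← h, mul_sub]
  have hquadric : pairProd C - pairProd C' ∈ toricIdeal H :=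
    mem_toricIdeal_of_X_mul_mem (hfactor ▸ prod_X_colorClass_sub_mem_toricIdeal hC hC')
  rw [hfactor]
  refine Ideal.mul_mem_left _ _ ?_
  by_cases hzero : pairProd C - pairProd C' = 0
  · rw [hzero]
    exact Ideal.zero_mem _
  · exact Ideal.subset_span ⟨hquadric,
      ((pairProd_homogeneous C).sub (pairProd_homogeneous C')).totalDegree hzero⟩

theorem prod_X_colorClass_sub_mem_span_of_reflTransGen_coloringStep
    (h : Relation.ReflTransGen (ColoringStep H) C C') :
    (∏ j, X (colorClass C j) : MvPolynomial (V → Bool) ℂ) - ∏ j, X (colorClass C' j) ∈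
      Ideal.span {g | g ∈ toricIdeal H ∧ g.totalDegree = 2} := by
  induction h with
  | refl => rw [sub_self]; exact Ideal.zero_mem _
  | @tail C₁ C₂ _ hstep ih =>
    obtain ⟨i, hi⟩ := hstep.exists_colorClass_eq
    rw [← sub_add_sub_cancel _ (∏ j, X (colorClass C₁ j))]
    exact Ideal.add_mem _ ih
      (prod_X_colorClass_sub_mem_span_of_colorClass_eq hstep.1 hstep.2.1 hi)

end CubicBinomials

/-- for proper 3-colorings `C_A`, `C_B` of `H`, the associated cubic binomial
`f = p_{a₁} p_{a₂} p_{a₃} - p_{b₁} p_{b₂} p_{b₃}` lies in `I_H`, and `f` lies in the ideal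
generated by the quadratic elements of `I_H` iff `C_A` and `C_B` lie in the same connected
component of the 3-coloring graph `C₃(H)`. -/
theorem cubic_binomial_coloring {V : Type} [Fintype V] [DecidableEq V]
    (H : SimpleGraph V) (CA CB : V → Fin 3)
    (hCA : ProperColoring H CA) (hCB : ProperColoring H CB)
    (f : MvPolynomial (V → Bool) ℂ)
    (hf : f = (∏ j : Fin 3, X (fun v : V => decide (CA v = j))) -
        ∏ j : Fin 3, X (fun v : V => decide (CB v = j))) :
    f ∈ toricIdeal H ∧
    (f ∈ Ideal.span {g : MvPolynomial (V → Bool) ℂ |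
        g ∈ toricIdeal H ∧ g.totalDegree = 2} ↔
      Relation.ReflTransGen (ColoringStep H) CA CB) := by
  subst hf
  exact ⟨prod_X_colorClass_sub_mem_toricIdeal hCA hCB,
    reflTransGen_coloringStep_of_prod_X_colorClass_sub_mem_span hCA hCB,
    prod_X_colorClass_sub_mem_span_of_reflTransGen_coloringStep⟩

end BinaryGraphModels
end
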